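/- arXiv:1407.8128 — 3 statements merged into one kernel-verified Lean document; each statement's English description precedes it below -/
import Mathlib

section
/- Let q = p^f be a prime power, let F_q be a finite field with q elements, and let G = PSp_4(q) be the quotient of Sp_4(q) = Matrix.symplecticGroup (Fin 2) F_q by its center. Let x ∈ G be an element of odd prime order r with r ≠ p, let i be the least positive integer a such that r divides q^a − 1, and let s ≠ p be a prime dividing the cardinality of the centralizer of x in G. Then: if i = 4 then s divides q^2 + 1, and if i ∈ {1, 2} then s divides q^2 − 1. -/
/-!
The cases `s = 2` and `s = r` are elementary; suppose `s` is odd and different from `r`. The centre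
of `Sp₂ₖ(q)` has exponent two, so `x` times an element of order `s` of its centralizer lifts to an
element `Z` of order `r * s` in `Sp₂ₖ(q)`. The eigenvalues of `Z` are at most `2k` roots of unity,
permuted by the Frobenius map `u ↦ u ^ q` and by inversion, and both `r` and `s` divide the order of
some eigenvalue.

An orbit of the Frobenius map longer than half the number of eigenvalues meets its inverse, so it is
closed under inversion, and inversion is its half-turn. Hence if some orbit contains `2k`
eigenvalues, then `u ^ q ^ k = u⁻¹` for all of them, and all their orders divide `q ^ k + 1`. If `q`
has order `2k` modulo `r`, an eigenvalue of order divisible by `r` has such an orbit. If `k = 2` and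
`q ^ 2 ≡ 1` modulo `r`, no orbit has length four, since otherwise `r` would divide both `q ^ 2 + 1`
and `q ^ 2 - 1`; nor has one length three, which is odd; so all of them have length at most two.
-/

section CommutingInvolution

open Function Set

variable {α : Type*} {S : Finset α} {φ ι : α → α} {x y : α}

theorem card_image_iterate_minimalPeriod [DecidableEq α] (φ : α → α) (x : α) :
    ((Finset.range (minimalPeriod φ x)).image (φ^[·] x)).card = minimalPeriod φ x := by
  rw [Finset.card_image_of_injOn, Finset.card_range]
  simpa only [Finset.coe_range] using iterate_injOn_Iio_minimalPeriod

theorem image_iterate_minimalPeriod_subset [DecidableEq α] (hφ : MapsTo φ S S) (hx : x ∈ S) :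
    (Finset.range (minimalPeriod φ x)).image (φ^[·] x) ⊆ S := by
  intro y hy
  obtain ⟨j, -, rfl⟩ := Finset.mem_image.mp hy
  exact hφ.iterate j hx

theorem minimalPeriod_le_card (hφ : MapsTo φ S S) (hx : x ∈ S) : minimalPeriod φ x ≤ S.card := by
  classical
  rw [← card_image_iterate_minimalPeriod φ x]
  exact Finset.card_le_card (image_iterate_minimalPeriod_subset hφ hx)

theorem exists_iterate_eq_of_card_le (hφ : MapsTo φ S S) (hcard : S.card ≤ minimalPeriod φ x)
    (hx : x ∈ S) (hy : y ∈ S) : ∃ j, φ^[j] x = y := by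
  classical
  have horbit := Finset.eq_of_subset_of_card_le (image_iterate_minimalPeriod_subset hφ hx)
    (hcard.trans_eq (card_image_iterate_minimalPeriod φ x).symm)
  rw [← horbit] at hy
  obtain ⟨j, -, hj⟩ := Finset.mem_image.mp hy
  exact ⟨j, hj⟩

theorem exists_iterate_eq_of_card_lt_two_mul (hφ : MapsTo φ S S) (hι : MapsTo ι S S)
    (hιinj : Injective ι) (hcomm : Function.Commute φ ι) (hx : x ∈ S)
    (hcard : S.card < 2 * minimalPeriod φ x) : ∃ j, φ^[j] x = ι x := by
  classical
  set m := minimalPeriod φ x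
  set O := (Finset.range m).image (φ^[·] x)
  have hO : O ⊆ S := image_iterate_minimalPeriod_subset hφ hx
  have hOcard : O.card = m := card_image_iterate_minimalPeriod φ x
  have hιO : O.image ι ⊆ S := Finset.image_subset_iff.mpr fun y hy => hι (hO hy)
  obtain ⟨y, hy⟩ : (O ∩ O.image ι).Nonempty := by
    refine Finset.inter_nonempty_of_card_lt_card_add_card hO hιO ?_
    rwa [Finset.card_image_of_injective _ hιinj, hOcard, ← two_mul]
  simp only [O, Finset.mem_inter, Finset.mem_image, Finset.mem_range, exists_exists_and_eq_and]
    at hy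
  obtain ⟨⟨a, -, rfl⟩, b, hb, hab⟩ := hy
  refine ⟨m - b + a, ?_⟩
  calc φ^[m - b + a] x = φ^[m - b] (ι (φ^[b] x)) := by rw [iterate_add_apply, hab]
    _ = ι (φ^[m - b + b] x) := by rw [(hcomm.iterate_left _).eq, iterate_add_apply]
    _ = ι x := by rw [Nat.sub_add_cancel hb.le, iterate_minimalPeriod]

theorem exists_minimalPeriod_eq_two_mul (hφ : MapsTo φ S S) (hι : MapsTo ι S S)
    (hinv : Involutive ι) (hcomm : Function.Commute φ ι) (hx : x ∈ S) (hne : ι x ≠ x)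
    (hcard : S.card < 2 * minimalPeriod φ x) :
    ∃ j, minimalPeriod φ x = 2 * j ∧ φ^[j] x = ι x := by
  obtain ⟨i, hi⟩ :=
    exists_iterate_eq_of_card_lt_two_mul hφ hι hinv.injective hcomm hx hcard
  set j := i % minimalPeriod φ x
  have hj : φ^[j] x = ι x := by rw [iterate_mod_minimalPeriod_eq, hi]
  have hj_lt : j < minimalPeriod φ x := Nat.mod_lt _ (by lia)
  have hj_ne : j ≠ 0 := fun h => hne (by rw [← hj, h, iterate_zero_apply])
  have hperiodic : IsPeriodicPt φ (2 * j) x := by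
    rw [IsPeriodicPt, IsFixedPt, two_mul, iterate_add_apply, hj, (hcomm.iterate_left j).eq, hj,
      hinv x]
  refine ⟨j, Eq.symm (Nat.eq_of_dvd_of_lt_two_mul (by lia) hperiodic.minimalPeriod_dvd ?_), hj⟩
  lia

theorem exists_iterate_eq_of_card_le_minimalPeriod (hφ : MapsTo φ S S) (hι : MapsTo ι S S)
    (hinv : Involutive ι) (hcomm : Function.Commute φ ι) (hx : x ∈ S) (hne : ι x ≠ x)
    (hcard : S.card ≤ minimalPeriod φ x) :
    ∃ j, minimalPeriod φ x = 2 * j ∧ ∀ y ∈ S, φ^[j] y = ι y := by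
  have hpos : 0 < S.card := Finset.card_pos.mpr ⟨x, hx⟩
  obtain ⟨j, hm, hj⟩ := exists_minimalPeriod_eq_two_mul hφ hι hinv hcomm hx hne (by lia)
  refine ⟨j, hm, fun y hy => ?_⟩
  obtain ⟨a, rfl⟩ := exists_iterate_eq_of_card_le hφ hcard hx hy
  rw [← iterate_add_apply, add_comm, iterate_add_apply, hj, (hcomm.iterate_left a).eq]

end CommutingInvolution

section PowersModulo

theorem orderOf_natCast_dvd_of_dvd {m n : ℕ} (h : m ∣ n) (q : ℕ) :
    orderOf (q : ZMod m) ∣ orderOf (q : ZMod n) := by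
  simpa using orderOf_map_dvd (ZMod.castHom h (ZMod m)).toMonoidHom (q : ZMod n)

theorem natCast_pow_eq_one_iff_dvd_pow_sub_one {m q : ℕ} (hq : 0 < q) (n : ℕ) :
    (q : ZMod m) ^ n = 1 ↔ m ∣ q ^ n - 1 := by
  rw [← ZMod.natCast_eq_zero_iff, Nat.cast_sub (Nat.one_le_pow n q hq), Nat.cast_pow,
    Nat.cast_one, sub_eq_zero]

theorem orderOf_natCast_eq_of_isLeast {q r i : ℕ} (hq : 0 < q)
    (hi : IsLeast {a : ℕ | 0 < a ∧ r ∣ q ^ a - 1} i) : orderOf (q : ZMod r) = i := by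
  simp only [← natCast_pow_eq_one_iff_dvd_pow_sub_one hq] at hi
  exact (orderOf_eq_iff hi.1.1).mpr
    ⟨hi.1.2, fun m hm hpos hone => hm.not_ge (hi.2 ⟨hpos, hone⟩)⟩

theorem dvd_pow_add_one_of_orderOf_natCast {q r k : ℕ} (hr : r.Prime) (hk : 0 < k)
    (h : orderOf (q : ZMod r) = 2 * k) : r ∣ q ^ k + 1 := by
  have : Fact r.Prime := ⟨hr⟩
  have hne : (q : ZMod r) ^ k ≠ 1 :=
    pow_ne_one_of_lt_orderOf hk.ne' (by lia)
  have hsq : ((q : ZMod r) ^ k) ^ 2 = 1 := by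
    rw [← pow_mul, mul_comm, ← h, pow_orderOf_eq_one]
  have hneg := (sq_eq_one_iff.mp hsq).resolve_left hne
  rw [← ZMod.natCast_eq_zero_iff, Nat.cast_add, Nat.cast_pow, hneg, Nat.cast_one, neg_add_cancel]

theorem natCast_ne_zero_of_coprime_card {F : Type*} [Field F] [Fintype F] {n : ℕ}
    (h : (Fintype.card F).Coprime n) : (n : F) ≠ 0 := by
  have hcop := Nat.Coprime.cast (R := F) h
  rw [FiniteField.cast_card_eq_zero, isCoprime_zero_left] at hcop
  exact hcop.ne_zero

end PowersModulo

section PowerMap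

variable {H : Type*} [Group H] {S : Finset H} {q : ℕ} {u : H}

theorem minimalPeriod_pow_eq_orderOf (q : ℕ) (u : H) :
    Function.minimalPeriod (· ^ q) u = orderOf (q : ZMod (orderOf u)) := by
  refine Function.minimalPeriod_eq_minimalPeriod_iff.mpr fun n => ?_
  rw [isPeriodicPt_mul_iff_pow_eq_one, Function.IsPeriodicPt, Function.IsFixedPt, pow_iterate,
    ← Nat.cast_pow, ← Nat.cast_one, ZMod.natCast_eq_natCast_iff, ← pow_eq_pow_iff_modEq, pow_one]

theorem orderOf_dvd_add_one_of_pow_eq_inv {n : ℕ} (h : u ^ n = u⁻¹) : orderOf u ∣ n + 1 :=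
  orderOf_dvd_of_pow_eq_one (by rw [pow_succ, h, inv_mul_cancel])

theorem inv_ne_self_of_odd_orderOf (hodd : Odd (orderOf u)) (hu : u ≠ 1) : u⁻¹ ≠ u := by
  intro h
  have htwo : orderOf u ∣ 1 + 1 := orderOf_dvd_add_one_of_pow_eq_inv (by rw [pow_one, h])
  exact hu (orderOf_eq_one_iff.mp
    (Nat.eq_one_of_dvd_coprimes (Nat.coprime_two_left.mpr hodd) htwo dvd_rfl))

/-- A finite set of group elements with the formal properties of the eigenvalues of a symplectic
matrix over the field with `q` elements whose order is odd and prime to `q`: it is stable under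
inversion and under the Frobenius map `u ↦ u ^ q`. -/
structure IsFrobeniusInvStable (q : ℕ) (S : Finset H) : Prop where
  pow_mem : ∀ u ∈ S, u ^ q ∈ S
  inv_mem : ∀ u ∈ S, u⁻¹ ∈ S
  odd_orderOf : ∀ u ∈ S, Odd (orderOf u)
  coprime_orderOf : ∀ u ∈ S, q.Coprime (orderOf u)

namespace IsFrobeniusInvStable

variable {x y : H} {r s : ℕ}

theorem commute_pow_inv (q : ℕ) : Function.Commute (fun u : H => u ^ q) (·⁻¹) :=
  fun u => inv_pow u q

theorem orderOf_natCast_le_card (hS : IsFrobeniusInvStable q S) (hx : x ∈ S) :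
    orderOf (q : ZMod (orderOf x)) ≤ S.card := by
  rw [← minimalPeriod_pow_eq_orderOf]
  exact minimalPeriod_le_card hS.pow_mem hx

theorem orderOf_natCast_pos (hS : IsFrobeniusInvStable q S) (hx : x ∈ S) :
    0 < orderOf (q : ZMod (orderOf x)) := by
  have : NeZero (orderOf x) := ⟨(hS.odd_orderOf x hx).pos.ne'⟩
  rw [← ZMod.coe_unitOfCoprime q (hS.coprime_orderOf x hx), orderOf_units]
  exact orderOf_pos _

theorem even_orderOf_natCast (hS : IsFrobeniusInvStable q S) (hx : x ∈ S) (hx1 : x ≠ 1)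
    (hcard : S.card < 2 * orderOf (q : ZMod (orderOf x))) :
    Even (orderOf (q : ZMod (orderOf x))) := by
  rw [← minimalPeriod_pow_eq_orderOf] at hcard ⊢
  obtain ⟨j, hj, -⟩ := exists_minimalPeriod_eq_two_mul hS.pow_mem hS.inv_mem inv_involutive
    (commute_pow_inv q) hx (inv_ne_self_of_odd_orderOf (hS.odd_orderOf x hx) hx1) hcard
  exact even_iff_two_dvd.mpr ⟨j, hj⟩

theorem orderOf_dvd_pow_add_one (hS : IsFrobeniusInvStable q S) {k : ℕ} (hcard : S.card ≤ 2 * k)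
    (hx : x ∈ S) (hx1 : x ≠ 1) (hk : orderOf (q : ZMod (orderOf x)) = 2 * k) (hy : y ∈ S) :
    orderOf y ∣ q ^ k + 1 := by
  rw [← minimalPeriod_pow_eq_orderOf] at hk
  obtain ⟨j, hj, hhalf⟩ := exists_iterate_eq_of_card_le_minimalPeriod hS.pow_mem hS.inv_mem
    inv_involutive (commute_pow_inv q) hx
    (inv_ne_self_of_odd_orderOf (hS.odd_orderOf x hx) hx1) (hcard.trans_eq hk.symm)
  obtain rfl : k = j := by lia
  apply orderOf_dvd_add_one_of_pow_eq_inv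
  simpa only [pow_iterate] using hhalf y hy

theorem dvd_pow_add_one (hS : IsFrobeniusInvStable q S) {k : ℕ} (hcard : S.card ≤ 2 * k)
    (hr : r ≠ 1) (hk : orderOf (q : ZMod r) = 2 * k) (hx : x ∈ S) (hrx : r ∣ orderOf x)
    (hy : y ∈ S) (hsy : s ∣ orderOf y) : s ∣ q ^ k + 1 := by
  have hx1 : x ≠ 1 := fun h => hr (by simpa [h] using hrx)
  have hle : 2 * k ≤ orderOf (q : ZMod (orderOf x)) :=
    hk ▸ Nat.le_of_dvd (hS.orderOf_natCast_pos hx) (orderOf_natCast_dvd_of_dvd hrx q)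
  have horder := ((hS.orderOf_natCast_le_card hx).trans hcard).antisymm hle
  exact hsy.trans (hS.orderOf_dvd_pow_add_one hcard hx hx1 horder hy)

theorem dvd_sq_sub_one (hS : IsFrobeniusInvStable q S) (hcard : S.card ≤ 4) (hq : 0 < q)
    (hr : r ≠ 1) (hr2 : r ∣ q ^ 2 - 1) (hx : x ∈ S) (hrx : r ∣ orderOf x)
    (hy : y ∈ S) (hsy : s ∣ orderOf y) : s ∣ q ^ 2 - 1 := by
  rcases eq_or_ne y 1 with rfl | hy1
  · exact (orderOf_one (G := H) ▸ hsy).trans (one_dvd _)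
  set m := orderOf (q : ZMod (orderOf y)) with hm
  have hm_pos : 0 < m := hS.orderOf_natCast_pos hy
  have hm_le : m ≤ 4 := (hS.orderOf_natCast_le_card hy).trans hcard
  have hm_ne_three : m ≠ 3 := fun h => by
    have := hS.even_orderOf_natCast hy hy1 (by lia)
    rw [← hm, h] at this
    exact absurd this (by decide)
  have hm_ne_four : m ≠ 4 := fun h => by
    have hr_add : r ∣ q ^ 2 + 1 :=
      hrx.trans (hS.orderOf_dvd_pow_add_one (k := 2) hcard hy hy1 h hx)
    have hr_two : r ∣ 2 := by
      have hpos : 0 < q ^ 2 := by positivity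
      convert Nat.dvd_sub hr_add hr2 using 1
      lia
    have hr_odd : Odd r := (hS.odd_orderOf x hx).of_dvd_nat hrx
    exact hr (Nat.eq_one_of_dvd_coprimes (Nat.coprime_two_left.mpr hr_odd) hr_two dvd_rfl)
  have hm_dvd : m ∣ 2 := by interval_cases m <;> lia
  exact hsy.trans ((natCast_pow_eq_one_iff_dvd_pow_sub_one hq 2).mp
    (orderOf_dvd_iff_pow_eq_one.mp hm_dvd))

end IsFrobeniusInvStable

end PowerMap

section UnitEigenvalues

open Polynomial

variable {F A : Type*} (K : Type*) [Field F] [Field K] [Algebra F K] [Ring A] [Algebra F A]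

theorem pow_eq_one_of_forall_aeval_root [IsAlgClosed K] {a b : ℕ} (hb : (b : F) ≠ 0) {z : A}
    (hz : z ^ (a * b) = 1) {f : F[X]} (hf : aeval z f = 0)
    (hroots : ∀ ν : K, aeval ν f = 0 → ν ^ a = 1) : z ^ a = 1 := by
  let g : F[X] := ∑ i ∈ Finset.range b, (X ^ a) ^ i
  have hgz : aeval z g * (z ^ a - 1) = 0 := by
    simp only [g, map_sum, map_pow, aeval_X, geom_sum_mul]
    rw [← pow_mul, hz, sub_self]
  have hcoprime : IsCoprime f g := by
    rw [isCoprime_iff_aeval_ne_zero_of_isAlgClosed F K]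
    intro ν
    by_contra! hν
    have hgν : algebraMap F K b = 0 := by simpa [g, hroots ν hν.1] using hν.2
    exact hb ((map_eq_zero _).mp hgν)
  obtain ⟨c, d, hcd⟩ := hcoprime
  have hdg : aeval z d * aeval z g = 1 := by simpa [hf] using congrArg (aeval z) hcd
  rw [← sub_eq_zero]
  calc z ^ a - 1 = aeval z d * (aeval z g * (z ^ a - 1)) := by rw [← mul_assoc, hdg, one_mul]
    _ = 0 := by rw [hgz, mul_zero]

theorem aeval_pow_card [Fintype F] (z : A) (f : F[X]) :
    aeval (z ^ Fintype.card F) f = aeval z f ^ Fintype.card F := by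
  rw [← expand_aeval, FiniteField.expand_card, map_pow]

variable (F) in
open scoped Classical in
/-- The nonzero roots in `K` of the minimal polynomial of `z`, that is, the nonzero eigenvalues of
`z` when `z` is a matrix. They are taken in the unit group of `K`, where inverses and orders are
those of a group. -/
noncomputable def unitEigenvalues (z : A) : Finset Kˣ :=
  ((minpoly F z).aroots K).toFinset.preimage Units.val Units.val_injective.injOn

variable {K} {z : A} {u : Kˣ} {n : ℕ}

theorem pow_eq_one_of_aeval_minpoly_eq_zero (hz : z ^ n = 1) {ν : K}
    (hν : aeval ν (minpoly F z) = 0) : ν ^ n = 1 := by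
  have hdvd : minpoly F z ∣ X ^ n - 1 := minpoly.dvd F z (by simp [hz])
  simpa [sub_eq_zero] using aeval_eq_zero_of_dvd_aeval_eq_zero hdvd hν

variable [FiniteDimensional F A]

theorem mem_unitEigenvalues : u ∈ unitEigenvalues F K z ↔ aeval (u : K) (minpoly F z) = 0 := by
  simp [unitEigenvalues, minpoly.ne_zero_of_finite F z]

theorem orderOf_dvd_of_mem_unitEigenvalues (hu : u ∈ unitEigenvalues F K z) :
    orderOf u ∣ orderOf z := by
  apply orderOf_dvd_of_pow_eq_one
  ext
  simpa using pow_eq_one_of_aeval_minpoly_eq_zero (pow_orderOf_eq_one z)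
    (mem_unitEigenvalues.mp hu)

theorem pow_mem_unitEigenvalues (hn : aeval (z ^ n) (minpoly F z) = 0)
    (hu : u ∈ unitEigenvalues F K z) : u ^ n ∈ unitEigenvalues F K z := by
  rw [mem_unitEigenvalues, Units.val_pow_eq_pow_val, ← expand_aeval]
  exact aeval_eq_zero_of_dvd_aeval_eq_zero (minpoly.dvd F z (by rwa [expand_aeval]))
    (mem_unitEigenvalues.mp hu)

theorem pow_card_mem_unitEigenvalues [Fintype F] (hu : u ∈ unitEigenvalues F K z) :
    u ^ Fintype.card F ∈ unitEigenvalues F K z :=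
  pow_mem_unitEigenvalues (by simp [aeval_pow_card]) hu

theorem exists_mem_unitEigenvalues_dvd_orderOf [IsAlgClosed K] (hz : IsOfFinOrder z) {r : ℕ}
    (hr : r.Prime) (hrF : (r : F) ≠ 0) (hrz : r ∣ orderOf z) :
    ∃ u ∈ unitEigenvalues F K z, r ∣ orderOf u := by
  by_contra! hnot
  obtain ⟨m, hm⟩ := hrz
  have hpos : 0 < r * m := hm ▸ hz.orderOf_pos
  have hzpow : z ^ (m * r) = 1 := by rw [mul_comm, ← hm, pow_orderOf_eq_one]
  have hroots (ν : K) (hν : aeval ν (minpoly F z) = 0) : ν ^ m = 1 := by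
    let u := Units.ofPowEqOne ν (m * r) (pow_eq_one_of_aeval_minpoly_eq_zero hzpow hν)
      (by lia)
    have hu : u ∈ unitEigenvalues F K z := mem_unitEigenvalues.mpr hν
    have hum : orderOf u ∣ m := ((hr.coprime_iff_not_dvd.mpr (hnot u hu)).symm).dvd_of_dvd_mul_left
      (hm ▸ orderOf_dvd_of_mem_unitEigenvalues hu)
    simpa [u] using congrArg Units.val (orderOf_dvd_iff_pow_eq_one.mp hum)
  have hzm : z ^ m = 1 :=
    pow_eq_one_of_forall_aeval_root K hrF hzpow (minpoly.aeval F z) hroots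
  have hle : r * m ≤ m :=
    hm ▸ Nat.le_of_dvd (Nat.pos_of_mul_pos_left hpos) (orderOf_dvd_of_pow_eq_one hzm)
  nlinarith [hr.two_le, Nat.pos_of_mul_pos_left hpos]

theorem card_unitEigenvalues_le {n : Type*} [Fintype n] [DecidableEq n] (M : Matrix n n F) :
    (unitEigenvalues F K M).card ≤ Fintype.card n := by
  classical
  calc (unitEigenvalues F K M).card
      ≤ ((minpoly F M).aroots K).toFinset.card :=
        Finset.card_le_card_of_injOn Units.val (fun u hu => by simpa [unitEigenvalues] using hu)
          Units.val_injective.injOn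
    _ ≤ ((minpoly F M).aroots K).card := Multiset.toFinset_card_le _
    _ ≤ (minpoly F M).natDegree := (card_roots' _).trans natDegree_map_le
    _ ≤ M.charpoly.natDegree :=
        natDegree_le_of_dvd (Matrix.minpoly_dvd_charpoly M) M.charpoly_monic.ne_zero
    _ = Fintype.card n := M.charpoly_natDegree_eq_dim

end UnitEigenvalues

section SymplecticMatrices

open Matrix Polynomial

variable {l R : Type*} [DecidableEq l] [Fintype l] [CommRing R]

theorem aeval_coe_inv_symplecticGroup (Z : symplecticGroup l R) (f : R[X]) :
    aeval ((Z⁻¹ : symplecticGroup l R) : Matrix (l ⊕ l) (l ⊕ l) R) f =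
      -J l R * (aeval (Z : Matrix (l ⊕ l) (l ⊕ l) R) f)ᵀ * J l R := by
  induction f using Polynomial.induction_on' with
  | add f g hf hg => simp only [map_add, hf, hg, transpose_add, mul_add, add_mul]
  | monomial n c =>
    simp only [aeval_monomial, ← Algebra.smul_def, transpose_smul, Matrix.mul_smul,
      Matrix.smul_mul]
    rw [← SubmonoidClass.coe_pow, inv_pow, SymplecticGroup.coe_inv, SubmonoidClass.coe_pow]

theorem fromBlocks_one_zero_one_mem_symplecticGroup {B : Matrix l l R} (hB : B.IsSymm) :
    fromBlocks 1 B 0 1 ∈ symplecticGroup l R := by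
  simp [SymplecticGroup.fromBlocks_mem_iff, hB.eq]

theorem sq_eq_one_of_mem_center_symplecticGroup {Z : symplecticGroup l R}
    (hZ : Z ∈ Subgroup.center (symplecticGroup l R)) : Z ^ 2 = 1 := by
  have hcomm (B : Matrix (l ⊕ l) (l ⊕ l) R) (hB : B ∈ symplecticGroup l R) :
      B * Z = Z * B := congrArg Subtype.val (Subgroup.mem_center_iff.mp hZ ⟨B, hB⟩)
  obtain ⟨Z, hZmem⟩ := Z
  obtain ⟨A, B, C, D, rfl⟩ : ∃ A B C D, Z = fromBlocks A B C D :=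
    ⟨_, _, _, _, (fromBlocks_toBlocks Z).symm⟩
  have hunip (T : Matrix l l R) (hT : T.IsSymm) :=
    hcomm _ (fromBlocks_one_zero_one_mem_symplecticGroup hT)
  have hJ := hcomm _ (SymplecticGroup.J_mem _ _)
  simp only [fromBlocks_multiply, J, fromBlocks_inj] at hunip hJ
  have hC : C = 0 := by simpa using (hunip 1 isSymm_one).1
  have hB : B = 0 := by simpa [hC, eq_comm] using hJ.1
  have hD : D = A := by simpa [hB] using (hunip 1 isSymm_one).2.1
  subst hC hB hD
  have hdiag : D.IsDiag := by
    intro i j hij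
    have h := congrFun (congrFun (hunip (single i i 1) (by simp [IsSymm])).2.1 i) j
    simpa [hij.symm] using h
  have hsq : D * D = 1 := by
    simpa [hdiag.isSymm.eq] using (SymplecticGroup.fromBlocks_mem_iff.mp hZmem).2.2
  apply Subtype.ext
  simp [pow_two, fromBlocks_multiply, hsq]

variable {F K : Type*} [Field F] [Field K] [Algebra F K] {Z : symplecticGroup l F}

theorem inv_mem_unitEigenvalues_symplecticGroup (hZ : IsOfFinOrder Z) {u : Kˣ}
    (hu : u ∈ unitEigenvalues F K (Z : Matrix (l ⊕ l) (l ⊕ l) F)) :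
    u⁻¹ ∈ unitEigenvalues F K (Z : Matrix (l ⊕ l) (l ⊕ l) F) := by
  have hZinv : Z⁻¹ = Z ^ (orderOf Z - 1) := by
    rw [inv_eq_iff_mul_eq_one, mul_pow_sub_one hZ.orderOf_pos.ne', pow_orderOf_eq_one]
  have huinv : u⁻¹ = u ^ (orderOf Z - 1) := by
    rw [inv_eq_iff_mul_eq_one, mul_pow_sub_one hZ.orderOf_pos.ne', ← orderOf_dvd_iff_pow_eq_one,
      ← orderOf_submonoid]
    exact orderOf_dvd_of_mem_unitEigenvalues hu
  rw [huinv]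
  refine pow_mem_unitEigenvalues ?_ hu
  rw [← SubmonoidClass.coe_pow, ← hZinv, aeval_coe_inv_symplecticGroup]
  simp

variable [Fintype F]

theorem isFrobeniusInvStable_unitEigenvalues_symplecticGroup (hodd : Odd (orderOf Z))
    (hcop : (Fintype.card F).Coprime (orderOf Z)) :
    IsFrobeniusInvStable (Fintype.card F)
      (unitEigenvalues F K (Z : Matrix (l ⊕ l) (l ⊕ l) F)) := by
  have hdvd {u : Kˣ} (hu : u ∈ unitEigenvalues F K (Z : Matrix (l ⊕ l) (l ⊕ l) F)) :
      orderOf u ∣ orderOf Z :=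
    orderOf_submonoid Z ▸ orderOf_dvd_of_mem_unitEigenvalues hu
  exact {
    pow_mem := fun _ => pow_card_mem_unitEigenvalues
    inv_mem := fun _ => inv_mem_unitEigenvalues_symplecticGroup (orderOf_pos_iff.mp hodd.pos)
    odd_orderOf := fun _ hu => hodd.of_dvd_nat (hdvd hu)
    coprime_orderOf := fun _ hu => hcop.coprime_dvd_right (hdvd hu) }

theorem exists_mem_unitEigenvalues_symplecticGroup [IsAlgClosed K] (hZ : IsOfFinOrder Z)
    (hcop : (Fintype.card F).Coprime (orderOf Z)) {r : ℕ} (hr : r.Prime) (hrZ : r ∣ orderOf Z) :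
    ∃ u ∈ unitEigenvalues F K (Z : Matrix (l ⊕ l) (l ⊕ l) F), r ∣ orderOf u :=
  exists_mem_unitEigenvalues_dvd_orderOf (Submonoid.isOfFinOrder_coe.mpr hZ) hr
    (natCast_ne_zero_of_coprime_card (hcop.coprime_dvd_right hrZ))
    (by rwa [orderOf_submonoid])

variable {r s : ℕ}

theorem dvd_card_pow_add_one_of_dvd_orderOf (hodd : Odd (orderOf Z))
    (hcop : (Fintype.card F).Coprime (orderOf Z)) (hr : r.Prime) (hs : s.Prime)
    (hrZ : r ∣ orderOf Z) (hsZ : s ∣ orderOf Z)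
    (hqr : orderOf (Fintype.card F : ZMod r) = 2 * Fintype.card l) :
    s ∣ Fintype.card F ^ Fintype.card l + 1 := by
  let K := AlgebraicClosure F
  have hfin : IsOfFinOrder Z := orderOf_pos_iff.mp hodd.pos
  obtain ⟨x, hx, hrx⟩ := exists_mem_unitEigenvalues_symplecticGroup (K := K) hfin hcop hr hrZ
  obtain ⟨y, hy, hsy⟩ := exists_mem_unitEigenvalues_symplecticGroup (K := K) hfin hcop hs hsZ
  have hcard := card_unitEigenvalues_le (K := K) (Z : Matrix (l ⊕ l) (l ⊕ l) F)
  rw [Fintype.card_sum, ← two_mul] at hcard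
  exact (isFrobeniusInvStable_unitEigenvalues_symplecticGroup hodd hcop).dvd_pow_add_one hcard
    hr.ne_one hqr hx hrx hy hsy

theorem dvd_card_sq_sub_one_of_dvd_orderOf (hl : Fintype.card l = 2) (hodd : Odd (orderOf Z))
    (hcop : (Fintype.card F).Coprime (orderOf Z)) (hr : r.Prime) (hs : s.Prime)
    (hrZ : r ∣ orderOf Z) (hsZ : s ∣ orderOf Z) (hqr : r ∣ Fintype.card F ^ 2 - 1) :
    s ∣ Fintype.card F ^ 2 - 1 := by
  let K := AlgebraicClosure F
  have hfin : IsOfFinOrder Z := orderOf_pos_iff.mp hodd.pos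
  obtain ⟨x, hx, hrx⟩ := exists_mem_unitEigenvalues_symplecticGroup (K := K) hfin hcop hr hrZ
  obtain ⟨y, hy, hsy⟩ := exists_mem_unitEigenvalues_symplecticGroup (K := K) hfin hcop hs hsZ
  have hcard := card_unitEigenvalues_le (K := K) (Z : Matrix (l ⊕ l) (l ⊕ l) F)
  rw [Fintype.card_sum, hl] at hcard
  exact (isFrobeniusInvStable_unitEigenvalues_symplecticGroup hodd hcop).dvd_sq_sub_one hcard
    Fintype.card_pos hr.ne_one hqr hx hrx hy hsy

end SymplecticMatrices

section LiftingOrders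

variable {G : Type*} [Group G] {N : Subgroup G} [N.Normal] {m : ℕ}

theorem exists_mk_eq_and_orderOf_eq (hN : ∀ z ∈ N, z ^ m = 1) {x : G ⧸ N}
    (hcop : m.Coprime (orderOf x)) : ∃ g : G, (g : G ⧸ N) = x ∧ orderOf g = orderOf x := by
  obtain ⟨g, rfl⟩ := QuotientGroup.mk_surjective x
  set n := orderOf (g : G ⧸ N)
  have hgn : g ^ n ∈ N := by
    rw [← QuotientGroup.eq_one_iff, QuotientGroup.mk_pow, pow_orderOf_eq_one]
  have hbezout : (m * m.gcdA n + n * m.gcdB n : ℤ) = 1 := by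
    rw [← Nat.gcd_eq_gcd_ab, hcop, Nat.cast_one]
  have hmk : ((g ^ (m * m.gcdA n : ℤ) : G) : G ⧸ N) = g := by
    rw [eq_sub_of_add_eq hbezout, QuotientGroup.mk_zpow, zpow_sub, zpow_one, zpow_mul,
      zpow_natCast, pow_orderOf_eq_one, one_zpow, inv_one, mul_one]
  refine ⟨_, hmk, Nat.dvd_antisymm (orderOf_dvd_of_pow_eq_one ?_) ?_⟩
  · calc (g ^ (m * m.gcdA n : ℤ)) ^ n = ((g ^ n) ^ m) ^ m.gcdA n := by
          simp only [← zpow_natCast, ← zpow_mul]; ring_nf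
      _ = 1 := by rw [hN _ hgn, one_zpow]
  · calc n = orderOf ((g ^ (m * m.gcdA n : ℤ) : G) : G ⧸ N) := by rw [hmk]
      _ ∣ orderOf (g ^ (m * m.gcdA n : ℤ)) := orderOf_map_dvd (QuotientGroup.mk' N) _

theorem exists_orderOf_eq_mul_of_dvd_card_centralizer [Finite G] (hN : ∀ z ∈ N, z ^ m = 1)
    {x : G ⧸ N} {s : ℕ} (hs : s.Prime) (hxs : (orderOf x).Coprime s)
    (hcop : m.Coprime (orderOf x * s))
    (hdvd : s ∣ Nat.card (Subgroup.centralizer ({x} : Set (G ⧸ N)))) :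
    ∃ g : G, orderOf g = orderOf x * s := by
  have : Fact s.Prime := ⟨hs⟩
  obtain ⟨⟨y, hyx⟩, hy⟩ := exists_prime_orderOf_dvd_card' s hdvd
  rw [Subgroup.orderOf_mk] at hy
  have hxy : Commute x y := (Subgroup.mem_centralizer_singleton_iff.mp hyx).symm
  have horder : orderOf (x * y) = orderOf x * s := by
    rw [hxy.orderOf_mul_eq_mul_orderOf_of_coprime (by rwa [hy]), hy]
  obtain ⟨g, -, hg⟩ := exists_mk_eq_and_orderOf_eq hN (horder ▸ hcop)
  exact ⟨g, hg.trans horder⟩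

end LiftingOrders

section ProjectiveSymplectic

open Matrix

variable {l F : Type*} [DecidableEq l] [Fintype l] [Field F]
  {x : symplecticGroup l F ⧸ Subgroup.center (symplecticGroup l F)} {r s : ℕ}

theorem exists_orderOf_symplecticGroup_eq_mul [Finite F] (hr : r.Prime) (hrodd : Odd r)
    (hx : orderOf x = r) (hs : s.Prime) (hsodd : Odd s) (hrs : r ≠ s)
    (hdvd : s ∣ Nat.card (Subgroup.centralizer {x})) :
    ∃ Z : symplecticGroup l F, orderOf Z = r * s := by
  subst hx
  exact exists_orderOf_eq_mul_of_dvd_card_centralizer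
    (fun _ hZ => sq_eq_one_of_mem_center_symplecticGroup hZ) hs
    ((Nat.coprime_primes hr hs).mpr hrs) (Nat.coprime_two_left.mpr (hrodd.mul hsodd)) hdvd

variable [Fintype F]

theorem dvd_card_pow_add_one_of_dvd_card_centralizer [Nonempty l] (hr : r.Prime) (hrodd : Odd r)
    (hqr : (Fintype.card F).Coprime r) (hx : orderOf x = r) (hs : s.Prime)
    (hqs : (Fintype.card F).Coprime s) (hdvd : s ∣ Nat.card (Subgroup.centralizer {x}))
    (horder : orderOf (Fintype.card F : ZMod r) = 2 * Fintype.card l) :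
    s ∣ Fintype.card F ^ Fintype.card l + 1 := by
  rcases eq_or_ne r s with rfl | hrs
  · exact dvd_pow_add_one_of_orderOf_natCast hr Fintype.card_pos horder
  rcases hs.eq_two_or_odd' with rfl | hsodd
  · exact ((Nat.coprime_two_right.mp hqs).pow.add_odd odd_one).two_dvd
  obtain ⟨Z, hZ⟩ := exists_orderOf_symplecticGroup_eq_mul hr hrodd hx hs hsodd hrs hdvd
  exact dvd_card_pow_add_one_of_dvd_orderOf (hZ ▸ hrodd.mul hsodd) (hZ ▸ hqr.mul_right hqs) hr hs
    (hZ ▸ dvd_mul_right r s) (hZ ▸ dvd_mul_left s r) horder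

theorem dvd_card_sq_sub_one_of_dvd_card_centralizer (hl : Fintype.card l = 2) (hr : r.Prime)
    (hrodd : Odd r) (hqr : (Fintype.card F).Coprime r) (hx : orderOf x = r) (hs : s.Prime)
    (hqs : (Fintype.card F).Coprime s) (hdvd : s ∣ Nat.card (Subgroup.centralizer {x}))
    (hr2 : r ∣ Fintype.card F ^ 2 - 1) : s ∣ Fintype.card F ^ 2 - 1 := by
  rcases eq_or_ne r s with rfl | hrs
  · exact hr2
  rcases hs.eq_two_or_odd' with rfl | hsodd
  · exact ((Nat.coprime_two_right.mp hqs).pow.tsub_odd odd_one).two_dvd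
  obtain ⟨Z, hZ⟩ := exists_orderOf_symplecticGroup_eq_mul hr hrodd hx hs hsodd hrs hdvd
  exact dvd_card_sq_sub_one_of_dvd_orderOf hl (hZ ▸ hrodd.mul hsodd) (hZ ▸ hqr.mul_right hqs) hr hs
    (hZ ▸ dvd_mul_right r s) (hZ ▸ dvd_mul_left s r) hr2

end ProjectiveSymplectic

/-- Lemma 2.6, `PSp₄(q)` case: bounds on primes `s ≠ p` dividing the order of the
centralizer of an element of odd prime order `r ≠ p` in `PSp₄(q)`, in terms of
`i = Φ(r,q)`, the least `a ≥ 1` with `r ∣ qᵃ - 1`. -/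
theorem PSp4_centralizer_prime_divisor {p f q : ℕ} (hp : p.Prime) (hf : 0 < f)
    (hq : q = p ^ f) (F : Type*) [Field F] [Fintype F] (hF : Fintype.card F = q)
    {r : ℕ} (hr : r.Prime) (hrodd : Odd r) (hrp : r ≠ p)
    (x : Matrix.symplecticGroup (Fin 2) F ⧸
      Subgroup.center (Matrix.symplecticGroup (Fin 2) F))
    (hx : orderOf x = r)
    {i : ℕ} (hi : IsLeast {a : ℕ | 0 < a ∧ r ∣ q ^ a - 1} i)
    {s : ℕ} (hs : s.Prime) (hsp : s ≠ p)
    (hsdvd : s ∣ Nat.card (Subgroup.centralizer ({x} : Set _))) :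
    (i = 4 → s ∣ q ^ 2 + 1) ∧ (i = 1 ∨ i = 2 → s ∣ q ^ 2 - 1) := by
  have hcop {t : ℕ} (ht : t.Prime) (htp : t ≠ p) : (Fintype.card F).Coprime t := by
    rw [hF, hq]
    exact ((Nat.coprime_primes hp ht).mpr htp.symm).pow_left f
  subst hF
  have horder := orderOf_natCast_eq_of_isLeast Fintype.card_pos hi
  refine ⟨fun h4 => ?_, fun h12 => ?_⟩
  · exact dvd_card_pow_add_one_of_dvd_card_centralizer hr hrodd (hcop hr hrp) hx hs
      (hcop hs hsp) hsdvd (horder.trans h4)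
  · have hi2 : i ∣ 2 := by rcases h12 with rfl | rfl <;> decide
    have hr2 : r ∣ Fintype.card F ^ 2 - 1 :=
      (natCast_pow_eq_one_iff_dvd_pow_sub_one Fintype.card_pos 2).mp
        (orderOf_dvd_iff_pow_eq_one.mp (horder ▸ hi2))
    exact dvd_card_sq_sub_one_of_dvd_card_centralizer (Fintype.card_fin 2) hr hrodd (hcop hr hrp)
      hx hs (hcop hs hsp) hsdvd hr2
end

section
/- Let q = p^f be a prime power, let F_q be a finite field with q elements, let m ≥ 2, and let G = PSp_{2m}(q) be the quotient of Sp_{2m}(q) = Matrix.symplecticGroup (Fin m) F_q by its center. Let x ∈ G be an element of order p and let s be a prime dividing the cardinality of the centralizer of x in G. Then s divides the cardinality of Sp_{2m−2}(q) = Matrix.symplecticGroup (Fin (m−1)) F_q. -/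
/-!
Lift `x` and an element of odd prime order `s ≠ p` of its centralizer to commuting isometries `u`
(unipotent) and `y` of the symplectic space `V` of dimension `2m`. The form
`((u - 1) v, d) ↦ ω(v, d)` on `range (u - 1)` is nondegenerate and `y`-invariant, and an isometry
of odd order of a nondegenerate form on an odd-dimensional space fixes a nonzero vector. Hence if
`y` fixes no nonzero vector of `range (u - 1)`, this space has even dimension `2i` with
`0 < 2i < 2m`, and `s` divides `q ^ (2i) - 1`, which divides `|Sp_{2i}(q)|` because `Sp_{2i}(q)` is
transitive on nonzero vectors. If `y` does fix a nonzero vector of `V`, the same argument applies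
with `y` in the place of `u`, since `V` is the direct sum of `range (y - 1)` and `ker (y - 1)`.
-/

open Matrix Module Polynomial

theorem eval_one_eq_zero_of_reverse_eq_neg {R : Type*} [Ring R] {P : R[X]}
    (hP : P.reverse = -P) (hodd : Odd P.natDegree) : P.eval 1 = 0 := by
  have hcoeff {i : ℕ} (hi : i ≤ P.natDegree) :
      P.coeff i + P.coeff (P.natDegree - i) = 0 := by
    have h := congrArg (coeff · i) hP
    simp only [coeff_reverse, revAt_le hi, coeff_neg] at h
    rw [h, add_neg_cancel]
  simp only [eval_eq_sum_range, one_pow, mul_one]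
  -- Cancelling the terms in pairs, instead of showing `2 * P.eval 1 = 0`, covers characteristic 2.
  refine Finset.sum_involution (fun i _ ↦ P.natDegree - i) ?_ ?_ ?_ ?_
  · intro i hi
    exact hcoeff (Finset.mem_range_succ_iff.1 hi)
  all_goals grind

section Matrix

variable {n R : Type*} [Fintype n] [DecidableEq n] [CommRing R] {A G : Matrix n n R}

theorem det_sq_eq_one_of_transpose_mul_mul_eq (hG : IsUnit G) (h : Aᵀ * G * A = G) :
    A.det ^ 2 = 1 := by
  have hdet := congrArg det h
  rw [det_mul, det_mul, det_transpose] at hdet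
  exact ((isUnit_iff_isUnit_det G).1 hG).mul_left_cancel (by linear_combination hdet)

theorem det_eq_one_of_transpose_mul_mul_eq (hG : IsUnit G) (h : Aᵀ * G * A = G) {s : ℕ}
    (hs : Odd s) (hA : A ^ s = 1) : A.det = 1 := by
  obtain ⟨k, rfl⟩ := hs
  have hdet := congrArg det hA
  rwa [det_pow, det_one, pow_succ, pow_mul, det_sq_eq_one_of_transpose_mul_mul_eq hG h, one_pow,
    one_mul] at hdet

theorem reverse_charpoly_eq_neg_of_transpose_mul_mul_eq (hn : Odd (Fintype.card n))
    (hG : IsUnit G) (h : Aᵀ * G * A = G) (hdet : A.det = 1) :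
    A.charpoly.reverse = -A.charpoly := by
  have hA : IsUnit A := (isUnit_iff_isUnit_det A).2 (by simp [hdet])
  have hinv : A⁻¹.charpoly = A.charpoly := by
    obtain ⟨U, rfl⟩ := hG
    have hconj : A⁻¹ = U⁻¹.val * Aᵀ * U.val :=
      inv_eq_left_inv (by rw [mul_assoc, mul_assoc, ← mul_assoc Aᵀ, h, Units.inv_mul])
    rw [hconj, coe_units_inv, charpoly_units_conj', charpoly_transpose]
  rw [charpoly_inv A hA, hn.neg_one_pow, hdet, ← reverse_charpoly] at hinv
  simpa [neg_eq_iff_eq_neg] using hinv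

theorem charpoly_isRoot_one_of_transpose_mul_mul_eq [Nontrivial R] (hn : Odd (Fintype.card n))
    (hG : IsUnit G) (h : Aᵀ * G * A = G) {s : ℕ} (hs : Odd s) (hA : A ^ s = 1) :
    A.charpoly.IsRoot 1 :=
  eval_one_eq_zero_of_reverse_eq_neg
    (reverse_charpoly_eq_neg_of_transpose_mul_mul_eq hn hG h
      (det_eq_one_of_transpose_mul_mul_eq hG h hs hA))
    (by rwa [charpoly_natDegree_eq_dim])

end Matrix

theorem exists_ne_zero_apply_eq_self_of_isOrthogonal {K V : Type*} [Field K] [AddCommGroup V]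
    [Module K V] [FiniteDimensional K V] {B : LinearMap.BilinForm K V} (hB : B.Nondegenerate)
    (hodd : Odd (finrank K V)) {T : End K V} (hT : B.IsOrthogonal T) {s : ℕ} (hs : Odd s)
    (hTs : T ^ s = 1) : ∃ v ≠ 0, T v = v := by
  let b := finBasis K V
  have hG : IsUnit (LinearMap.BilinForm.toMatrix b B) :=
    (isUnit_iff_isUnit_det _).2
      ((LinearMap.BilinForm.nondegenerate_iff_det_ne_zero b).1 hB).isUnit
  have hisom : (LinearMap.toMatrix b b T)ᵀ * LinearMap.BilinForm.toMatrix b B *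
      LinearMap.toMatrix b b T = LinearMap.BilinForm.toMatrix b B := by
    rw [← LinearMap.BilinForm.toMatrix_comp, LinearMap.ext₂ (f := B.comp T T) (g := B) hT]
  have hroot := charpoly_isRoot_one_of_transpose_mul_mul_eq (by simpa using hodd) hG hisom hs
    (by rw [LinearMap.toMatrix_pow, hTs, LinearMap.toMatrix_one])
  rw [LinearMap.charpoly_toMatrix, ← End.hasEigenvalue_iff_isRoot_charpoly] at hroot
  obtain ⟨v, hv⟩ := hroot.exists_hasEigenvector
  exact ⟨v, hv.2, by simpa using hv.apply_eq_smul⟩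

section CommutingEndomorphisms

variable {R V : Type*} [CommRing R] [AddCommGroup V] [Module R V] {u y : End R V}

theorem apply_mem_range_sub_one_of_commute (huy : Commute u y) :
    ∀ d ∈ (u - 1).range, y d ∈ (u - 1).range := by
  rintro _ ⟨v, rfl⟩
  exact ⟨y v, LinearMap.congr_fun (huy.sub_left (.one_left y)).eq v⟩

theorem restrict_range_sub_one_pow_eq_one (huy : Commute u y) {n : ℕ} (hy : y ^ n = 1) :
    y.restrict (apply_mem_range_sub_one_of_commute huy) ^ n = 1 := by
  rw [End.pow_restrict]
  ext
  simp [hy]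

theorem apply_eq_zero_of_mem_ker_of_mem_range {B : LinearMap.BilinForm R V}
    (hu : B.IsOrthogonal u) {v d : V} (hv : v ∈ (u - 1).ker) (hd : d ∈ (u - 1).range) :
    B v d = 0 := by
  obtain ⟨w, rfl⟩ := hd
  have huv : u v = v := by simpa [sub_eq_zero] using hv
  calc B v ((u - 1) w) = B v (u w) - B v w := by simp
    _ = B (u v) (u w) - B v w := by rw [huv]
    _ = 0 := by rw [hu, sub_self]

end CommutingEndomorphisms

section Wall

variable {K V : Type*} [Field K] [AddCommGroup V] [Module K V]
  {B : LinearMap.BilinForm K V} {u y : End K V}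

variable (B u) in
/-- The Wall form of an isometry `u` of `B`: the form `((u - 1) v, d) ↦ B v d` on the range of
`u - 1`. It is encoded through a choice of preimages under `u - 1`, which is immaterial when `u` is
an isometry. -/
noncomputable def wallForm : LinearMap.BilinForm K (u - 1).range :=
  B.comp ((u - 1).rangeRestrict.exists_rightInverse_of_surjective
    (u - 1).range_rangeRestrict).choose (u - 1).range.subtype

theorem wallForm_rangeRestrict_apply (hu : B.IsOrthogonal u) (v : V) (d : (u - 1).range) :
    wallForm B u ((u - 1).rangeRestrict v) d = B v d := by
  have hsec := ((u - 1).rangeRestrict.exists_rightInverse_of_surjective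
    (u - 1).range_rangeRestrict).choose_spec
  rw [wallForm, LinearMap.BilinForm.comp_apply, Submodule.subtype_apply, ← sub_eq_zero,
    ← LinearMap.sub_apply, ← map_sub]
  refine apply_eq_zero_of_mem_ker_of_mem_range hu ?_ d.2
  rw [← (u - 1).ker_rangeRestrict, LinearMap.mem_ker, map_sub, sub_eq_zero]
  exact LinearMap.congr_fun hsec _

theorem wallForm_nondegenerate [FiniteDimensional K V] (hB : B.Nondegenerate)
    (hu : B.IsOrthogonal u) : (wallForm B u).Nondegenerate := by
  refine .ofSeparatingRight fun d hd ↦ Subtype.ext (hB.2 d fun v ↦ ?_)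
  rw [← wallForm_rangeRestrict_apply hu, hd]

theorem wallForm_isOrthogonal_restrict (hu : B.IsOrthogonal u) (hy : B.IsOrthogonal y)
    (huy : Commute u y) :
    (wallForm B u).IsOrthogonal (y.restrict (apply_mem_range_sub_one_of_commute huy)) := by
  intro c d
  obtain ⟨v, rfl⟩ := (u - 1).surjective_rangeRestrict c
  have hyv : y.restrict (apply_mem_range_sub_one_of_commute huy) ((u - 1).rangeRestrict v) =
      (u - 1).rangeRestrict (y v) :=
    Subtype.ext (LinearMap.congr_fun (huy.sub_left (.one_left y)).eq v).symm
  rw [hyv, wallForm_rangeRestrict_apply hu, wallForm_rangeRestrict_apply hu]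
  exact hy v d

theorem exists_mem_range_apply_eq_self_of_odd_finrank [FiniteDimensional K V]
    (hB : B.Nondegenerate) (hu : B.IsOrthogonal u) (hy : B.IsOrthogonal y) (huy : Commute u y)
    {s : ℕ} (hs : Odd s) (hys : y ^ s = 1) (hodd : Odd (finrank K (u - 1).range)) :
    ∃ v ∈ (u - 1).range, v ≠ 0 ∧ y v = v := by
  obtain ⟨v, hv, hyv⟩ := exists_ne_zero_apply_eq_self_of_isOrthogonal
    (wallForm_nondegenerate hB hu) hodd (wallForm_isOrthogonal_restrict hu hy huy) hs
    (restrict_range_sub_one_pow_eq_one huy hys)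
  exact ⟨v, v.2, by simpa using hv, congrArg Subtype.val hyv⟩

end Wall

section FixedVectors

variable {K V : Type*} [Field K] [AddCommGroup V] [Module K V] {T : End K V}

theorem prime_dvd_natCard_pow_finrank_sub_one [Finite V] {s : ℕ} (hs : s.Prime)
    (hT : T ^ s = 1) (hfix : ∀ v, T v = v → v = 0) : s ∣ Nat.card K ^ finrank K V - 1 := by
  classical
  have := Fintype.ofFinite V
  have := Fact.mk hs
  have hcard := Equiv.Perm.card_fixedPoints_modEq (p := s) (n := 1)
    (f := MulAction.toEndHom (α := V) T) (by rw [pow_one, ← map_pow, hT, map_one])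
  have hfixed : Nat.card (Function.fixedPoints (MulAction.toEndHom (α := V) T)) = 1 :=
    Nat.card_eq_one_iff_exists.2 ⟨⟨0, map_zero T⟩, fun v ↦ Subtype.ext (hfix v v.2)⟩
  rw [Fintype.card_eq_nat_card, Fintype.card_eq_nat_card, hfixed] at hcard
  rw [← natCard_eq_pow_finrank (K := K) (V := V)]
  exact (Nat.modEq_iff_dvd' Nat.card_pos).1 hcard.symm

theorem disjoint_range_sub_one_ker_sub_one_of_pow_eq_one {n : ℕ} (hT : T ^ n = 1)
    (hn : (n : K) ≠ 0) :
    Disjoint (T - 1).range (T - 1).ker := by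
  rw [Submodule.disjoint_def]
  rintro _ ⟨v, rfl⟩ hv
  set w := (T - 1) v
  have hw : T w = w := by simpa [sub_eq_zero] using hv
  have hpow (i : ℕ) : (T ^ i) w = w := by
    rw [End.pow_apply, Function.iterate_fixed hw]
  have hsum : (∑ i ∈ Finset.range n, T ^ i) w = 0 := by
    rw [← End.mul_apply, geom_sum_mul, hT, sub_self, LinearMap.zero_apply]
  have : (n : K) • w = 0 := by simpa [hpow, Nat.cast_smul_eq_nsmul] using hsum
  exact (smul_eq_zero.1 this).resolve_left hn

theorem ker_sub_one_ne_bot_of_pow_char_eq_one [Nontrivial V] (p : ℕ) [Fact p.Prime] [CharP K p]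
    (hT : T ^ p = 1) : (T - 1).ker ≠ ⊥ := by
  have := charP_of_injective_algebraMap (algebraMap K (End K V)).injective p
  have hnil : (T - 1) ^ p = 0 := by
    rw [sub_pow_char_of_commute _ (Commute.one_right T), hT, one_pow, sub_self]
  intro hker
  have hinj : Function.Injective ⇑((T - 1) ^ p) := by
    rw [End.coe_pow]
    exact (LinearMap.ker_eq_bot.1 hker).iterate p
  obtain ⟨v, hv⟩ := exists_ne (0 : V)
  exact hv (hinj (by simp [hnil]))

end FixedVectors

section CommutingIsometries

variable {K V : Type*} [Field K] [Finite K] [AddCommGroup V] [Module K V] [FiniteDimensional K V]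
  {B : LinearMap.BilinForm K V} {u y : End K V} {s : ℕ}

theorem exists_dvd_natCard_pow_two_mul_sub_one_of_disjoint (hB : B.Nondegenerate)
    (hu : B.IsOrthogonal u) (hy : B.IsOrthogonal y) (huy : Commute u y) (hs : s.Prime)
    (hodd : Odd s) (hys : y ^ s = 1) (hne : u ≠ 1) (hker : (u - 1).ker ≠ ⊥)
    (hdisj : Disjoint (u - 1).range (y - 1).ker) :
    ∃ i, 0 < i ∧ 2 * i < finrank K V ∧ s ∣ Nat.card K ^ (2 * i) - 1 := by
  have hfix : ∀ v ∈ (u - 1).range, y v = v → v = 0 := fun v hv hyv ↦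
    Submodule.disjoint_def.1 hdisj v hv (by simpa [sub_eq_zero] using hyv)
  obtain ⟨i, hi⟩ : Even (finrank K (u - 1).range) := by
    by_contra! h
    obtain ⟨v, hv, hv0, hyv⟩ := exists_mem_range_apply_eq_self_of_odd_finrank hB hu hy huy hodd
      hys (Nat.not_even_iff_odd.1 h)
    exact hv0 (hfix v hv hyv)
  have hrange_pos : 0 < finrank K (u - 1).range := by
    rw [Module.finrank_pos_iff, Submodule.nontrivial_iff_ne_bot, ne_eq, LinearMap.range_eq_bot]
    exact sub_ne_zero.2 hne
  have hker_pos : 0 < finrank K (u - 1).ker :=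
    Module.finrank_pos_iff.2 (Submodule.nontrivial_iff_ne_bot.2 hker)
  have hsum := (u - 1).finrank_range_add_finrank_ker
  refine ⟨i, by lia, by lia, ?_⟩
  have := Module.finite_of_finite K (M := V)
  rw [two_mul, ← hi]
  refine prime_dvd_natCard_pow_finrank_sub_one hs
    (restrict_range_sub_one_pow_eq_one huy hys) fun v hv ↦ ?_
  exact Subtype.ext (hfix v v.2 (congrArg Subtype.val hv))

theorem exists_dvd_natCard_pow_two_mul_sub_one_of_commute (hB : B.Nondegenerate)
    (hu : B.IsOrthogonal u) (hy : B.IsOrthogonal y) (huy : Commute u y) (hs : s.Prime)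
    (hodd : Odd s) (hsK : (s : K) ≠ 0) (hys : y ^ s = 1) (hu1 : u ≠ 1) (hy1 : y ≠ 1)
    (hker : (u - 1).ker ≠ ⊥) :
    ∃ i, 0 < i ∧ 2 * i < finrank K V ∧ s ∣ Nat.card K ^ (2 * i) - 1 := by
  by_cases hyker : (y - 1).ker = ⊥
  · exact exists_dvd_natCard_pow_two_mul_sub_one_of_disjoint hB hu hy huy hs hodd hys hu1 hker
      (by simp [hyker])
  · exact exists_dvd_natCard_pow_two_mul_sub_one_of_disjoint hB hy hy (.refl y) hs hodd hys hy1
      hyker (disjoint_range_sub_one_ker_sub_one_of_pow_eq_one hys hsK)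

end CommutingIsometries

section SymplecticForm

variable {l R K : Type*} [DecidableEq l] [Fintype l] [CommRing R] [Field K]

variable (l R) in
/-- The standard symplectic form on `R ^ (2 l)`, whose isometry group is the symplectic group. -/
noncomputable def symplecticForm : LinearMap.BilinForm R (l ⊕ l → R) := Matrix.toBilin' (J l R)

theorem symplecticForm_isAlt : (symplecticForm l R).IsAlt := by
  intro v
  rw [symplecticForm, toBilin'_apply', J, fromBlocks_mulVec]
  simp [dotProduct, neg_mulVec, mul_comm]

theorem symplecticForm_nondegenerate : (symplecticForm l K).Nondegenerate :=
  Matrix.Nondegenerate.toBilin' (nondegenerate_of_det_ne_zero (isUnit_det_J l K).ne_zero)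

theorem toMatrix'_mem_symplecticGroup_iff {T : End R (l ⊕ l → R)} :
    LinearMap.toMatrix' T ∈ symplecticGroup l R ↔ (symplecticForm l R).IsOrthogonal T := by
  rw [SymplecticGroup.mem_iff', ← (toBilin' (R₁ := R)).injective.eq_iff, ← toBilin'_comp,
    toLin'_toMatrix', LinearMap.ext_iff₂]
  rfl

variable (l R) in
/-- The action of the symplectic group on column vectors, as a linear representation. -/
def symplecticToEnd : symplecticGroup l R →* End R (l ⊕ l → R) :=
  (toLinAlgEquiv' : Matrix (l ⊕ l) (l ⊕ l) R ≃ₐ[R] _).toMonoidHom.comp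
    (symplecticGroup l R).subtype

theorem symplecticToEnd_injective : Function.Injective (symplecticToEnd l R) :=
  toLinAlgEquiv'.injective.comp Subtype.val_injective

theorem symplecticToEnd_isOrthogonal (g : symplecticGroup l R) :
    (symplecticForm l R).IsOrthogonal (symplecticToEnd l R g) :=
  toMatrix'_mem_symplecticGroup_iff.1 ((LinearMap.toMatrix'_toLin' g.1).symm ▸ g.2)

theorem exists_symplecticForm_ne_zero {v : l ⊕ l → K} (hv : v ≠ 0) :
    ∃ w, symplecticForm l K v w ≠ 0 := by
  by_contra! h
  exact hv (symplecticForm_nondegenerate.1 v h)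

theorem symplecticForm_swap (v w : l ⊕ l → R) :
    symplecticForm l R w v = -symplecticForm l R v w :=
  (symplecticForm_isAlt.neg_eq v w).symm

theorem symplecticForm_ne_zero_comm {v w : l ⊕ l → R} :
    symplecticForm l R v w ≠ 0 ↔ symplecticForm l R w v ≠ 0 := by
  rw [symplecticForm_swap v w, neg_ne_zero]

/-- The symplectic transvection `v ↦ v + c ω(v, a) a` in the direction `a`. -/
noncomputable def symplecticTransvection (a : l ⊕ l → R) (c : R) : symplecticGroup l R :=
  ⟨LinearMap.toMatrix' (LinearMap.transvection (c • (symplecticForm l R).flip a) a), by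
    rw [toMatrix'_mem_symplecticGroup_iff]
    intro v w
    simp [LinearMap.transvection.apply, symplecticForm_isAlt.self_eq_zero, symplecticForm_swap w a]
    ring⟩

theorem symplecticTransvection_smul (a : l ⊕ l → R) (c : R) (v : l ⊕ l → R) :
    symplecticTransvection a c • v = v + (c * symplecticForm l R v a) • a :=
  LinearMap.congr_fun
    (toLin'_toMatrix' (LinearMap.transvection (c • (symplecticForm l R).flip a) a)) v

theorem symplecticTransvection_mul (a : l ⊕ l → R) (c d : R) :
    symplecticTransvection a c * symplecticTransvection a d = symplecticTransvection a (c + d) := by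
  refine symplecticToEnd_injective (LinearMap.ext fun v ↦ ?_)
  change (symplecticTransvection a c * symplecticTransvection a d) • v =
    symplecticTransvection a (c + d) • v
  simp only [mul_smul, symplecticTransvection_smul, map_add, LinearMap.add_apply, map_smul,
    LinearMap.smul_apply, symplecticForm_isAlt.self_eq_zero, smul_zero, add_zero]
  module

theorem natCard_dvd_natCard_symplecticGroup [Nonempty l] :
    Nat.card K ∣ Nat.card (symplecticGroup l K) := by
  obtain ⟨a, ha⟩ := exists_ne (0 : l ⊕ l → K)
  obtain ⟨w, hw⟩ := exists_symplecticForm_ne_zero ha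
  let t : Multiplicative K →* symplecticGroup l K :=
    .mk' (fun c ↦ symplecticTransvection a c.toAdd)
      fun c d ↦ (symplecticTransvection_mul a c.toAdd d.toAdd).symm
  refine Subgroup.card_dvd_of_injective (α := Multiplicative K) t fun c d hcd ↦ ?_
  have h : symplecticTransvection a c.toAdd • w = symplecticTransvection a d.toAdd • w :=
    congrArg (· • w) hcd
  rw [symplecticTransvection_smul, symplecticTransvection_smul, add_right_inj] at h
  exact Multiplicative.toAdd.injective
    (mul_right_cancel₀ (symplecticForm_ne_zero_comm.1 hw) (smul_left_injective K ha h))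

theorem exists_symplecticTransvection_smul_eq {v w : l ⊕ l → K} (h : symplecticForm l K v w ≠ 0) :
    ∃ c, symplecticTransvection (w - v) c • v = w := by
  refine ⟨(symplecticForm l K v w)⁻¹, ?_⟩
  rw [symplecticTransvection_smul, map_sub, symplecticForm_isAlt.self_eq_zero, sub_zero,
    inv_mul_cancel₀ h, one_smul, add_sub_cancel]

theorem exists_symplecticForm_ne_zero_and_ne_zero {v w : l ⊕ l → K} (hv : v ≠ 0) (hw : w ≠ 0) :
    ∃ z, symplecticForm l K v z ≠ 0 ∧ symplecticForm l K z w ≠ 0 := by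
  obtain ⟨a, ha⟩ := exists_symplecticForm_ne_zero hv
  obtain ⟨b, hb⟩ := exists_symplecticForm_ne_zero hw
  rw [symplecticForm_ne_zero_comm] at hb
  by_cases ha' : symplecticForm l K a w = 0
  · by_cases hb' : symplecticForm l K v b = 0
    · exact ⟨a + b, by simpa [hb'] using ha, by simpa [ha'] using hb⟩
    · exact ⟨b, hb', hb⟩
  · exact ⟨a, ha, ha'⟩

theorem exists_symplecticGroup_smul_eq {v w : l ⊕ l → K} (hv : v ≠ 0) (hw : w ≠ 0) :
    ∃ g : symplecticGroup l K, g • v = w := by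
  obtain ⟨z, hvz, hzw⟩ := exists_symplecticForm_ne_zero_and_ne_zero hv hw
  obtain ⟨c, hc⟩ := exists_symplecticTransvection_smul_eq hvz
  obtain ⟨d, hd⟩ := exists_symplecticTransvection_smul_eq hzw
  exact ⟨symplecticTransvection _ d * symplecticTransvection _ c, by rw [mul_smul, hc, hd]⟩

theorem orbit_symplecticGroup_eq_compl_zero {v : l ⊕ l → K} (hv : v ≠ 0) :
    MulAction.orbit (symplecticGroup l K) v = {0}ᶜ := by
  ext w
  refine ⟨?_, exists_symplecticGroup_smul_eq hv⟩
  rintro ⟨g, rfl⟩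
  exact (smul_ne_zero_iff_ne g).2 hv

theorem natCard_pow_sub_one_dvd_natCard_symplecticGroup [Finite K] [Nonempty l] :
    Nat.card K ^ (2 * Fintype.card l) - 1 ∣ Nat.card (symplecticGroup l K) := by
  obtain ⟨v, hv⟩ := exists_ne (0 : l ⊕ l → K)
  have hindex := MulAction.index_stabilizer (symplecticGroup l K) v
  rw [orbit_symplecticGroup_eq_compl_zero hv, Set.ncard_compl, Set.ncard_singleton,
    Nat.card_fun, Nat.card_eq_fintype_card (α := l ⊕ l), Fintype.card_sum, ← two_mul] at hindex
  exact hindex ▸ Subgroup.index_dvd_card _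

theorem symplecticForm_smul_smul_of_mem_center {z : symplecticGroup l R}
    (hz : z ∈ Subgroup.center (symplecticGroup l R)) (a v : l ⊕ l → R) :
    symplecticForm l R v a • z • a = symplecticForm l R (z • v) a • a := by
  have h : z • symplecticTransvection a 1 • v = symplecticTransvection a 1 • z • v := by
    rw [← mul_smul, ← mul_smul, Subgroup.mem_center_iff.1 hz]
  simp only [symplecticTransvection_smul, one_mul, smul_add, add_right_inj] at h
  rw [← h, smul_comm]

theorem exists_eq_smul_one_of_mem_center {z : symplecticGroup l K}
    (hz : z ∈ Subgroup.center (symplecticGroup l K)) :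
    ∃ c : K, (z : Matrix (l ⊕ l) (l ⊕ l) K) = c • 1 := by
  obtain ⟨c, hc⟩ := LinearMap.exists_eq_smul_id_of_forall_notLinearIndependent
    (f := toLin' z.1) fun a hind ↦ by
      obtain ⟨w, hw⟩ := exists_symplecticForm_ne_zero (hind.ne_zero 0)
      have h := symplecticForm_smul_smul_of_mem_center hz a w
      rw [LinearIndependent.pair_iff] at hind
      have := (hind (-symplecticForm l K (z • w) a) (symplecticForm l K w a) (by
        rw [neg_smul, ← h]; exact neg_add_cancel _)).2
      exact symplecticForm_ne_zero_comm.1 hw this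
  exact ⟨c, toLin'.injective (by rw [hc, map_smul, toLin'_one]; rfl)⟩

theorem eq_one_or_eq_neg_one_of_mem_center {z : symplecticGroup l K}
    (hz : z ∈ Subgroup.center (symplecticGroup l K)) :
    (z : Matrix (l ⊕ l) (l ⊕ l) K) = 1 ∨ (z : Matrix (l ⊕ l) (l ⊕ l) K) = -1 := by
  obtain ⟨c, hc⟩ := exists_eq_smul_one_of_mem_center hz
  rcases isEmpty_or_nonempty l with _ | ⟨⟨i⟩⟩
  · exact .inl (Subsingleton.elim _ _)
  have hcc : c * c = 1 := by
    have h := SymplecticGroup.mem_iff.1 z.2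
    rw [hc] at h
    simpa [J] using congrFun₂ h (.inr i) (.inl i)
  rw [hc]
  exact (mul_self_eq_one_iff.1 hcc).imp (by simp [·]) (by simp [·])

theorem pow_eq_one_of_mem_center {z : symplecticGroup l K}
    (hz : z ∈ Subgroup.center (symplecticGroup l K)) {n : ℕ} (hn : (-1 : K) ^ n = 1) :
    z ^ n = 1 := by
  refine Subtype.ext ?_
  rcases eq_one_or_eq_neg_one_of_mem_center hz with h | h
  · rw [SubmonoidClass.coe_pow, h, one_pow, OneMemClass.coe_one]
  · rw [SubmonoidClass.coe_pow, h, ← map_one (algebraMap K (Matrix (l ⊕ l) (l ⊕ l) K)),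
      ← map_neg, ← map_pow, hn, map_one, OneMemClass.coe_one]

end SymplecticForm

section Embedding

variable {ι κ l R K : Type*} [DecidableEq ι] [DecidableEq κ] [DecidableEq l]
  [CommRing R] [Field K]

/-- The reordering of the coordinates of a symplectic space `R ^ (2 l)` that exhibits it as the
orthogonal sum of `R ^ (2 ι)` and `R ^ (2 κ)`. -/
def symplecticCoordEquiv (e : ι ⊕ κ ≃ l) : (ι ⊕ ι) ⊕ (κ ⊕ κ) ≃ l ⊕ l :=
  (Equiv.sumSumSumComm ι ι κ κ).trans (Equiv.sumCongr e e)

theorem reindex_fromBlocks_J (e : ι ⊕ κ ≃ l) :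
    reindex (symplecticCoordEquiv e) (symplecticCoordEquiv e)
      (fromBlocks (J ι R) 0 0 (J κ R)) = J l R := by
  rw [← Equiv.eq_symm_apply]
  ext i j
  rcases i with (i | i) | (i | i) <;> rcases j with (j | j) | (j | j) <;>
    simp [symplecticCoordEquiv, J, one_apply]

variable [Fintype ι] [Fintype κ] [Fintype l]

theorem reindex_fromBlocks_mem_symplecticGroup (e : ι ⊕ κ ≃ l) {A : Matrix (ι ⊕ ι) (ι ⊕ ι) R}
    {D : Matrix (κ ⊕ κ) (κ ⊕ κ) R} (hA : A ∈ symplecticGroup ι R) (hD : D ∈ symplecticGroup κ R) :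
    reindex (symplecticCoordEquiv e) (symplecticCoordEquiv e) (fromBlocks A 0 0 D) ∈
      symplecticGroup l R := by
  rw [SymplecticGroup.mem_iff, ← reindex_fromBlocks_J e]
  simp [fromBlocks_multiply, fromBlocks_transpose, SymplecticGroup.mem_iff.1 hA,
    SymplecticGroup.mem_iff.1 hD]

/-- The embedding of the symplectic group on `κ` in that on `l ≃ ι ⊕ κ`, acting trivially on the
coordinates from `ι`. -/
def symplecticGroupEmbed (e : ι ⊕ κ ≃ l) : symplecticGroup κ R →* symplecticGroup l R where
  toFun g := ⟨_, reindex_fromBlocks_mem_symplecticGroup e (one_mem _) g.2⟩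
  map_one' := Subtype.ext (by simp)
  map_mul' g h := Subtype.ext (by simp [fromBlocks_multiply])

theorem symplecticGroupEmbed_injective (e : ι ⊕ κ ≃ l) :
    Function.Injective (symplecticGroupEmbed (R := R) e) := fun _ _ hgh ↦
  Subtype.ext (fromBlocks_inj.1 ((reindex _ _).injective (congrArg Subtype.val hgh))).2.2.2

theorem natCard_symplecticGroup_fin_dvd_of_le {i k : ℕ} (h : i ≤ k) :
    Nat.card (symplecticGroup (Fin i) R) ∣ Nat.card (symplecticGroup (Fin k) R) := by
  obtain ⟨j, rfl⟩ := Nat.exists_eq_add_of_le' h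
  exact Subgroup.card_dvd_of_injective _ (symplecticGroupEmbed_injective finSumFinEquiv)

theorem natCard_pow_sub_one_dvd_natCard_symplecticGroup_fin [Finite K] {i k : ℕ} (hi : 0 < i)
    (hik : i ≤ k) : Nat.card K ^ (2 * i) - 1 ∣ Nat.card (symplecticGroup (Fin k) K) := by
  have : Nonempty (Fin i) := ⟨⟨0, hi⟩⟩
  have h := natCard_pow_sub_one_dvd_natCard_symplecticGroup (l := Fin i) (K := K)
  rw [Fintype.card_fin] at h
  exact h.trans (natCard_symplecticGroup_fin_dvd_of_le hik)

end Embedding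

section Central

variable {G : Type*} [Group G] {N : Subgroup G} {n : ℕ}

theorem exists_mk_eq_and_pow_eq_one [N.Normal] (hN : ∀ z ∈ N, z ^ (n + 1) = 1) {a : G ⧸ N}
    (ha : a ^ n = 1) : ∃ g : G, (g : G ⧸ N) = a ∧ g ^ n = 1 := by
  obtain ⟨g, rfl⟩ := QuotientGroup.mk_surjective a
  refine ⟨g ^ (n + 1), ?_, ?_⟩
  · rw [QuotientGroup.mk_pow, pow_succ, ha, one_mul]
  · rw [← pow_mul, mul_comm, pow_mul]
    exact hN _ ((QuotientGroup.eq_one_iff _).1 ha)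

theorem commute_of_commute_mk [N.Normal] (hcenter : N ≤ Subgroup.center G)
    (hN : ∀ z ∈ N, z ^ (n + 1) = 1) {u y : G} (hu : u ^ n = 1)
    (huy : Commute (u : G ⧸ N) (y : G ⧸ N)) : Commute u y := by
  obtain ⟨c, hc, hconj⟩ : ∃ c ∈ N, y * u * y⁻¹ = c * u :=
    ⟨y * u * y⁻¹ * u⁻¹, by
      rw [← QuotientGroup.eq_one_iff]
      simp [← huy.eq], by group⟩
  have hcu : Commute c u := (Subgroup.mem_center_iff.1 (hcenter hc) u).symm
  have hcn : c ^ n = 1 := by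
    rw [← mul_one (c ^ n), ← hu, ← hcu.mul_pow, ← hconj, conj_pow, hu, mul_one, mul_inv_cancel]
  have hc1 : c = 1 := by simpa [pow_succ, hcn] using hN c hc
  rw [hc1, one_mul, mul_inv_eq_iff_eq_mul] at hconj
  exact hconj.symm

end Central

theorem prime_dvd_natCard_symplecticGroup_of_commute {K : Type*} [Field K] [Finite K] (p : ℕ)
    [Fact p.Prime] [CharP K p] {k : ℕ} {u y : symplecticGroup (Fin (k + 1)) K} (hu : u ^ p = 1)
    (hu1 : u ≠ 1) (huy : Commute u y) {s : ℕ} (hs : s.Prime) (hodd : Odd s) (hsp : s ≠ p)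
    (hys : y ^ s = 1) (hy1 : y ≠ 1) : s ∣ Nat.card (symplecticGroup (Fin k) K) := by
  have hsK : (s : K) ≠ 0 := by
    rw [ne_eq, CharP.cast_eq_zero_iff K p, Nat.prime_dvd_prime_iff_eq Fact.out hs]
    exact hsp.symm
  let ρ := symplecticToEnd (Fin (k + 1)) K
  have hρ {g : symplecticGroup (Fin (k + 1)) K} (hg : g ≠ 1) : ρ g ≠ 1 :=
    (map_ne_one_iff ρ symplecticToEnd_injective).2 hg
  obtain ⟨i, hi, hik, hsi⟩ := exists_dvd_natCard_pow_two_mul_sub_one_of_commute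
    symplecticForm_nondegenerate (symplecticToEnd_isOrthogonal u) (symplecticToEnd_isOrthogonal y)
    (huy.map ρ) hs hodd hsK (by rw [← map_pow, hys, map_one]) (hρ hu1) (hρ hy1)
    (ker_sub_one_ne_bot_of_pow_char_eq_one p (by rw [← map_pow, hu, map_one]))
  rw [finrank_fintype_fun_eq_card, Fintype.card_sum, Fintype.card_fin] at hik
  exact hsi.trans (natCard_pow_sub_one_dvd_natCard_symplecticGroup_fin hi (by lia))

theorem two_dvd_natCard_symplecticGroup {K : Type*} [Field K] {k : ℕ} (hk : 0 < k)
    (hK : Odd (Nat.card K)) : 2 ∣ Nat.card (symplecticGroup (Fin k) K) :=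
  have : Finite K := Nat.finite_of_card_ne_zero hK.pos.ne'
  (Nat.Odd.sub_odd hK.pow odd_one).two_dvd.trans
    (natCard_pow_sub_one_dvd_natCard_symplecticGroup_fin one_pos hk)

theorem exists_commute_lift_of_commute_mk_center {l K : Type*} [DecidableEq l] [Fintype l]
    [Field K] (p : ℕ) [Fact p.Prime] [CharP K p] {s : ℕ} (hs : Odd s)
    {a b : symplecticGroup l K ⧸ Subgroup.center (symplecticGroup l K)}
    (ha : a ^ p = 1) (hb : b ^ s = 1) (hab : Commute a b) :
    ∃ u y : symplecticGroup l K, u = a ∧ y = b ∧ u ^ p = 1 ∧ y ^ s = 1 ∧ Commute u y := by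
  have hcenter_p (z) (hz : z ∈ Subgroup.center (symplecticGroup l K)) : z ^ (p + 1) = 1 :=
    pow_eq_one_of_mem_center hz (by rw [pow_succ, neg_one_pow_char, neg_one_mul, neg_neg])
  have hcenter_s (z) (hz : z ∈ Subgroup.center (symplecticGroup l K)) : z ^ (s + 1) = 1 :=
    pow_eq_one_of_mem_center hz hs.add_one.neg_one_pow
  obtain ⟨u, rfl, hu⟩ := exists_mk_eq_and_pow_eq_one hcenter_p ha
  obtain ⟨y, rfl, hy⟩ := exists_mk_eq_and_pow_eq_one hcenter_s hb
  exact ⟨u, y, rfl, rfl, hu, hy, commute_of_commute_mk le_rfl hcenter_p hu hab⟩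

/-- Lemma 2.8: if `x ∈ PSp_{2m}(q)` has order `p` and `s` is a prime dividing
`|C_G(x)|`, then `s` divides `|Sp_{2m-2}(q)|`. -/
theorem PSp_unipotent_centralizer_prime_divisor {p f q : ℕ} (hp : p.Prime) (hf : 0 < f)
    (hq : q = p ^ f) (F : Type*) [Field F] [Fintype F] (hF : Fintype.card F = q)
    {m : ℕ} (hm : 2 ≤ m)
    (x : Matrix.symplecticGroup (Fin m) F ⧸
      Subgroup.center (Matrix.symplecticGroup (Fin m) F))
    (hx : orderOf x = p)
    {s : ℕ} (hs : s.Prime)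
    (hsdvd : s ∣ Nat.card (Subgroup.centralizer ({x} : Set _))) :
    s ∣ Nat.card (Matrix.symplecticGroup (Fin (m - 1)) F) := by
  have := Fact.mk hp
  have := Fact.mk hs
  have := charP_of_card_eq_prime_pow (hF.trans hq)
  have hcard : Nat.card F = p ^ f := by rw [Nat.card_eq_fintype_card, hF, hq]
  obtain ⟨k, rfl⟩ := Nat.exists_eq_add_of_le' (one_le_two.trans hm)
  have hk : 0 < k := by lia
  rw [Nat.add_sub_cancel]
  rcases eq_or_ne s p with rfl | hsp
  · have : Nonempty (Fin k) := ⟨⟨0, hk⟩⟩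
    exact (dvd_pow_self s hf.ne').trans (hcard ▸ natCard_dvd_natCard_symplecticGroup)
  rcases hs.eq_two_or_odd' with rfl | hodd
  · exact two_dvd_natCard_symplecticGroup hk (hcard ▸ (hp.odd_of_ne_two hsp.symm).pow)
  obtain ⟨⟨b, hb⟩, hbs⟩ := exists_prime_orderOf_dvd_card' s hsdvd
  rw [Subgroup.orderOf_mk] at hbs
  obtain ⟨u, y, rfl, rfl, hu, hy, huy⟩ := exists_commute_lift_of_commute_mk_center p hodd
    (orderOf_dvd_iff_pow_eq_one.1 hx.dvd) (orderOf_dvd_iff_pow_eq_one.1 hbs.dvd)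
    (Subgroup.mem_centralizer_singleton_iff.1 hb).symm
  refine prime_dvd_natCard_symplecticGroup_of_commute p hu ?_ huy hs hodd hsp hy ?_
  · rintro rfl
    exact hp.one_lt.ne (by simpa using hx)
  · rintro rfl
    exact hs.one_lt.ne (by simpa using hbs)
end

section
/- Let G = Matrix.GeneralLinearGroup (Fin 6) (ZMod 2) (equal to SL_6(2) = L_6(2), which is simple) acting naturally on the vector space Fin 6 → ZMod 2, and let H be the stabilizer in G of the standard basis vector e_0 (equivalently, of the 1-dimensional subspace it spans), i.e. the maximal parabolic subgroup P_1 ≅ 2^5.L_5(2). Then Γ(G) = Γ(H): a prime divides |G| iff it divides |H|, and for all distinct primes r, s, G has an element of order r·s iff H has an element of order r·s. -/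
/-- The natural action of `GL₆(𝔽₂)` on the vector space `Fin 6 → ZMod 2`,
given by matrix-vector multiplication. -/
instance glMulAction : MulAction (Matrix.GeneralLinearGroup (Fin 6) (ZMod 2))
    (Fin 6 → ZMod 2) where
  smul g v := Matrix.mulVec (g : Matrix (Fin 6) (Fin 6) (ZMod 2)) v
  one_smul v := Matrix.one_mulVec v
  mul_smul g h v := (Matrix.mulVec_mulVec v (g : Matrix (Fin 6) (Fin 6) (ZMod 2))
    (h : Matrix (Fin 6) (Fin 6) (ZMod 2))).symm

/-!
`GL` is transitive on nonzero vectors, so `P₁` contains a conjugate of every element fixing a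
nonzero vector. Elements of orders 6, 10, 14, 15, 21 and 31 with such a fixed vector are direct sums
of a transvection or an identity map with multiplications by elements of `𝔽₄`, `𝔽₈`, `𝔽₁₆`, `𝔽₃₂`.

No other product of two primes of `π(G)` is the order of an element. Let `f` have prime order `r` on
`V = 𝔽_q^n`, where `q` has order `d` modulo `r` and `n < 2d`. Counting points modulo `r` shows that
`V = V^f ⊕ (f - 1)V`, where `(f - 1)V` has dimension `d` and no proper nonzero `f`-invariant
subspace. If `g` has prime order `s` and commutes with `f`, its fixed vectors in `(f - 1)V` form an
`f`-invariant subspace. If that is zero, `s` divides `q^d - 1`; if it is all of `(f - 1)V`, then `g`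
acts nontrivially on `V^f` and `s` divides `|GL_{n-d}(q)|`. For `q = 2` and `n = 6`, the cases
`r = 5`, `d = 4` and `r = 31`, `d = 5` exclude the orders `35` and `31p`.
-/

open Module Matrix

section FixedPoints

lemma card_modEq_card_fixedPoints {α : Type*} [Finite α] {p : ℕ} [Fact p.Prime] {φ : α → α}
    (hφ : φ^[p] = id) : Nat.card α ≡ Nat.card (Function.fixedPoints φ) [MOD p] := by
  classical
  have := Fintype.ofFinite α
  have hpow : (show Function.End α from φ) ^ p ^ 1 = 1 := by
    rw [pow_one]
    exact (hom_coe_pow (fun ψ : Function.End α => ψ) rfl (fun _ _ => rfl) _ p).trans hφ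
  have hmod := Equiv.Perm.card_fixedPoints_modEq hpow
  rwa [Fintype.card_eq_nat_card, Fintype.card_eq_nat_card] at hmod

lemma card_modEq_card_inf_fixedSubmodule {R V : Type*} [Semiring R] [AddCommMonoid V] [Module R V]
    {p : ℕ} [Fact p.Prime] {f : End R V} (hf : f ^ p = 1) {W : Submodule R V} [Finite W]
    (hW : ∀ w ∈ W, f w ∈ W) : Nat.card W ≡ Nat.card ↥(W ⊓ f.fixedSubmodule) [MOD p] := by
  have hiter : (f.restrict hW)^[p] = id := by
    ext w
    simp [← End.coe_pow, End.pow_restrict, hf]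
  let e : Function.fixedPoints (f.restrict hW) ≃ ↥(W ⊓ f.fixedSubmodule) :=
    { toFun := fun w => ⟨w.1, w.1.2, congrArg Subtype.val w.2.eq⟩
      invFun := fun w => ⟨⟨w, w.2.1⟩, Subtype.ext w.2.2⟩ }
  exact Nat.card_congr e ▸ card_modEq_card_fixedPoints hiter

end FixedPoints

section Commute

variable {R V : Type*} [Semiring R] [AddCommMonoid V] [Module R V] {f g : End R V}

lemma apply_mem_fixedSubmodule_of_commute (h : Commute f g) :
    ∀ v ∈ g.fixedSubmodule, f v ∈ g.fixedSubmodule := by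
  intro v hv
  rw [LinearMap.mem_fixedSubmodule_iff] at hv ⊢
  calc g (f v) = f (g v) := (LinearMap.congr_fun h v).symm
    _ = f v := by rw [hv]

lemma apply_mem_range_of_commute (h : Commute f g) :
    ∀ v ∈ LinearMap.range g, f v ∈ LinearMap.range g := by
  rintro _ ⟨v, rfl⟩
  exact ⟨f v, (LinearMap.congr_fun h v).symm⟩

end Commute

section FiniteDimensional

lemma orderOf_dvd_card_GL {R V ι : Type*} [CommRing R] [AddCommGroup V] [Module R V]
    [Fintype ι] [DecidableEq ι] (b : Basis ι R V) {f : End R V} (hf : IsOfFinOrder f) :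
    orderOf f ∣ Nat.card (GL ι R) := by
  obtain ⟨u, rfl⟩ := hf.isUnit
  rw [orderOf_units, Nat.card_congr (Matrix.GeneralLinearGroup.toLin' b).toEquiv]
  exact orderOf_dvd_natCard u

variable {F V : Type*} [Field F] [AddCommGroup V] [Module F V] [FiniteDimensional F V]

lemma finrank_fixedSubmodule_lt {f : End F V} (hf : f ≠ 1) :
    finrank F f.fixedSubmodule < finrank F V :=
  Submodule.finrank_lt (LinearMap.fixedSubmodule_eq_top_iff.not.mpr hf)

lemma finrank_range_sub_one_add_finrank_fixedSubmodule (f : End F V) :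
    finrank F (LinearMap.range (f - 1)) + finrank F f.fixedSubmodule = finrank F V := by
  rw [f.fixedSubmodule_eq_ker]
  exact LinearMap.finrank_range_add_finrank_ker (f - 1)

lemma le_fixedSubmodule_of_not_dvd_card_GL {p : ℕ} [Fact p.Prime] {g : End F V} (hg : g ^ p = 1)
    {W : Submodule F V} (hW : ∀ w ∈ W, g w ∈ W) (hp : ¬ p ∣ Nat.card (GL (Fin (finrank F W)) F)) :
    W ≤ g.fixedSubmodule := by
  have hpow : g.restrict hW ^ p = 1 := by
    ext w
    simp [End.pow_restrict, hg]
  have hone : g.restrict hW = 1 := by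
    by_contra hne
    refine hp ?_
    rw [← orderOf_eq_prime hpow hne]
    exact orderOf_dvd_card_GL (finBasis F W)
      (isOfFinOrder_iff_pow_eq_one.mpr ⟨p, (Fact.out : p.Prime).pos, hpow⟩)
  intro w hw
  exact congrArg Subtype.val (LinearMap.congr_fun hone ⟨w, hw⟩)

lemma orderOf_card_dvd_finrank_sub [Finite F] {p : ℕ} [Fact p.Prime] {f : End F V}
    (hf : f ^ p = 1) (hp : (Nat.card F : ZMod p) ≠ 0) {W : Submodule F V}
    (hW : ∀ w ∈ W, f w ∈ W) :
    orderOf (Nat.card F : ZMod p) ∣ finrank F W - finrank F ↥(W ⊓ f.fixedSubmodule) := by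
  have : Finite W := Module.finite_of_finite F
  have hmod := (ZMod.natCast_eq_natCast_iff _ _ _).mpr (card_modEq_card_inf_fixedSubmodule hf hW)
  rw [natCard_eq_pow_finrank (K := F) (V := W), natCard_eq_pow_finrank (K := F) (V := ↥(W ⊓ _)),
    Nat.cast_pow, Nat.cast_pow] at hmod
  have hle : finrank F ↥(W ⊓ f.fixedSubmodule) ≤ finrank F W :=
    Submodule.finrank_mono inf_le_left
  rw [← Nat.sub_add_cancel hle, pow_add] at hmod
  exact orderOf_dvd_of_pow_eq_one (mul_eq_right₀ (pow_ne_zero _ hp) |>.mp hmod)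

end FiniteDimensional

lemma natCast_ne_zero_of_orderOf_pos {R : Type*} [Semiring R] [Nontrivial R] {n : ℕ}
    (h : 0 < orderOf (n : R)) : (n : R) ≠ 0 := by
  intro h0
  simp [h0] at h

section SmallDimension

variable {F V : Type*} [Field F] [Finite F] [AddCommGroup V] [Module F V] [FiniteDimensional F V]
  {r : ℕ} [Fact r.Prime] {f : End F V}

lemma finrank_range_sub_one (hf : f ^ r = 1) (hf1 : f ≠ 1)
    (hV : finrank F V < 2 * orderOf (Nat.card F : ZMod r)) :
    finrank F (LinearMap.range (f - 1)) = orderOf (Nat.card F : ZMod r) := by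
  have hdvd := orderOf_card_dvd_finrank_sub hf (natCast_ne_zero_of_orderOf_pos (by omega))
    (W := ⊤) fun _ _ => Submodule.mem_top
  have hrank := finrank_range_sub_one_add_finrank_fixedSubmodule f
  have hlt := finrank_fixedSubmodule_lt hf1
  rw [top_inf_eq, finrank_top, ← hrank, Nat.add_sub_cancel] at hdvd
  exact Nat.eq_of_dvd_of_lt_two_mul (by omega) hdvd (by omega)

lemma disjoint_range_sub_one_fixedSubmodule (hf : f ^ r = 1) (hf1 : f ≠ 1)
    (hV : finrank F V < 2 * orderOf (Nat.card F : ZMod r)) :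
    Disjoint (LinearMap.range (f - 1)) f.fixedSubmodule := by
  have hdvd := orderOf_card_dvd_finrank_sub hf (natCast_ne_zero_of_orderOf_pos (by omega))
    (apply_mem_range_of_commute ((Commute.refl f).sub_right (Commute.one_right f)))
  have hrange := finrank_range_sub_one hf hf1 hV
  have hrank := finrank_range_sub_one_add_finrank_fixedSubmodule f
  have hle : finrank F ↥(LinearMap.range (f - 1) ⊓ f.fixedSubmodule) ≤ finrank F f.fixedSubmodule :=
    Submodule.finrank_mono inf_le_right
  rw [hrange] at hdvd
  have := Nat.le_of_dvd (by omega) hdvd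
  rw [disjoint_iff, ← Submodule.finrank_eq_zero (R := F)]
  omega

lemma range_sub_one_sup_fixedSubmodule (hf : f ^ r = 1) (hf1 : f ≠ 1)
    (hV : finrank F V < 2 * orderOf (Nat.card F : ZMod r)) :
    LinearMap.range (f - 1) ⊔ f.fixedSubmodule = ⊤ :=
  Submodule.eq_top_of_disjoint _ _ (finrank_range_sub_one_add_finrank_fixedSubmodule f).ge
    (disjoint_range_sub_one_fixedSubmodule hf hf1 hV)

lemma eq_bot_or_eq_range_sub_one (hf : f ^ r = 1) (hf1 : f ≠ 1)
    (hV : finrank F V < 2 * orderOf (Nat.card F : ZMod r)) {W : Submodule F V}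
    (hle : W ≤ LinearMap.range (f - 1)) (hW : ∀ w ∈ W, f w ∈ W) :
    W = ⊥ ∨ W = LinearMap.range (f - 1) := by
  have hdvd := orderOf_card_dvd_finrank_sub hf (natCast_ne_zero_of_orderOf_pos (by omega)) hW
  have hdisj := (disjoint_range_sub_one_fixedSubmodule hf hf1 hV).mono_left hle
  rw [hdisj.eq_bot, finrank_bot, Nat.sub_zero, ← finrank_range_sub_one hf hf1 hV] at hdvd
  refine (finrank F W).eq_zero_or_pos.imp Submodule.finrank_eq_zero.mp fun hpos => ?_
  exact Submodule.eq_of_le_of_finrank_le hle (Nat.le_of_dvd hpos hdvd)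

variable {s : ℕ} [Fact s.Prime] {g : End F V}

lemma dvd_card_pow_sub_one_or_range_sub_one_le_fixedSubmodule (hf : f ^ r = 1) (hf1 : f ≠ 1)
    (hV : finrank F V < 2 * orderOf (Nat.card F : ZMod r)) (hg : g ^ s = 1) (hfg : Commute f g) :
    s ∣ Nat.card F ^ orderOf (Nat.card F : ZMod r) - 1 ∨
      LinearMap.range (f - 1) ≤ g.fixedSubmodule := by
  have hfinv := apply_mem_range_of_commute ((Commute.refl f).sub_right (Commute.one_right f))
  have hginv := apply_mem_range_of_commute (hfg.symm.sub_right (Commute.one_right g))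
  have hW : ∀ w ∈ LinearMap.range (f - 1) ⊓ g.fixedSubmodule,
      f w ∈ LinearMap.range (f - 1) ⊓ g.fixedSubmodule := fun w hw =>
    ⟨hfinv w hw.1, apply_mem_fixedSubmodule_of_commute hfg w hw.2⟩
  refine (eq_bot_or_eq_range_sub_one hf hf1 hV inf_le_left hW).imp (fun hbot => ?_) inf_eq_left.mp
  have : Finite (LinearMap.range (f - 1)) := Module.finite_of_finite F
  have hmod := card_modEq_card_inf_fixedSubmodule hg hginv
  rw [hbot, natCard_eq_pow_finrank (K := F), finrank_range_sub_one hf hf1 hV,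
    Nat.card_unique (α := (⊥ : Submodule F V))] at hmod
  exact (Nat.modEq_iff_dvd' (Nat.one_le_pow _ _ Nat.card_pos)).mp hmod.symm

lemma dvd_card_pow_sub_one_or_dvd_card_GL (hf : f ^ r = 1) (hf1 : f ≠ 1)
    (hV : finrank F V < 2 * orderOf (Nat.card F : ZMod r)) (hg : g ^ s = 1) (hg1 : g ≠ 1)
    (hfg : Commute f g) :
    s ∣ Nat.card F ^ orderOf (Nat.card F : ZMod r) - 1 ∨
      s ∣ Nat.card (GL (Fin (finrank F V - orderOf (Nat.card F : ZMod r))) F) := by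
  refine (dvd_card_pow_sub_one_or_range_sub_one_le_fixedSubmodule hf hf1 hV hg hfg).imp_right
    fun hrange => ?_
  have hrank := finrank_range_sub_one_add_finrank_fixedSubmodule f
  rw [finrank_range_sub_one hf hf1 hV] at hrank
  rw [Nat.sub_eq_of_eq_add' hrank.symm]
  by_contra hs
  have hfixed := le_fixedSubmodule_of_not_dvd_card_GL hg
    (apply_mem_fixedSubmodule_of_commute hfg.symm) hs
  refine hg1 (LinearMap.fixedSubmodule_eq_top_iff.mp (top_le_iff.mp ?_))
  exact range_sub_one_sup_fixedSubmodule hf hf1 hV ▸ sup_le hrange hfixed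

lemma dvd_card_pow_sub_one_or_dvd_card_GL_of_orderOf_eq_mul {x : End F V} (hx : orderOf x = r * s)
    (hV : finrank F V < 2 * orderOf (Nat.card F : ZMod r)) :
    s ∣ Nat.card F ^ orderOf (Nat.card F : ZMod r) - 1 ∨
      s ∣ Nat.card (GL (Fin (finrank F V - orderOf (Nat.card F : ZMod r))) F) := by
  have hr : r.Prime := Fact.out
  have hs : s.Prime := Fact.out
  have hpow : x ^ (r * s) = 1 := hx ▸ pow_orderOf_eq_one x
  refine dvd_card_pow_sub_one_or_dvd_card_GL (f := x ^ s) (g := x ^ r) ?_ ?_ hV ?_ ?_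
    (Commute.pow_pow_self x s r)
  · rw [← pow_mul, mul_comm, hpow]
  · exact pow_ne_one_of_lt_orderOf hs.ne_zero (hx ▸ lt_mul_left hs.pos hr.one_lt)
  · rw [← pow_mul, hpow]
  · exact pow_ne_one_of_lt_orderOf hr.ne_zero (hx ▸ lt_mul_right hr.pos hs.one_lt)

end SmallDimension

section GLSixTwo

lemma primeFactors_card_GL_six_two :
    (Nat.card (GL (Fin 6) (ZMod 2))).primeFactors = {2, 3, 5, 7, 31} := by
  have hcard : Nat.card (GL (Fin 6) (ZMod 2)) = 2 ^ 15 * 3 ^ 4 * 5 * 7 ^ 2 * 31 := by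
    rw [Matrix.card_GL_field, ZMod.card]
    decide
  rw [hcard, Nat.primeFactors_mul, Nat.primeFactors_mul, Nat.primeFactors_mul,
    Nat.primeFactors_mul, Nat.primeFactors_prime_pow, Nat.primeFactors_prime_pow,
    Nat.primeFactors_prime_pow, Nat.Prime.primeFactors, Nat.Prime.primeFactors]
  all_goals first | rfl | norm_num

lemma dvd_two_pow_sub_one_or_dvd_card_GL_of_orderOf_eq_mul {ι : Type*} [Fintype ι] [DecidableEq ι]
    {r s : ℕ} [Fact r.Prime] [Fact s.Prime] {x : GL ι (ZMod 2)} (hx : orderOf x = r * s)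
    (hι : Fintype.card ι < 2 * orderOf (2 : ZMod r)) :
    s ∣ 2 ^ orderOf (2 : ZMod r) - 1 ∨
      s ∣ Nat.card (GL (Fin (Fintype.card ι - orderOf (2 : ZMod r))) (ZMod 2)) := by
  let toEnd := Matrix.toLinAlgEquiv' (R := ZMod 2) (n := ι)
  have horder : orderOf (toEnd x) = r * s := by
    rw [← hx, ← orderOf_units]
    exact toEnd.toMulEquiv.orderOf_eq _
  have hdvd := dvd_card_pow_sub_one_or_dvd_card_GL_of_orderOf_eq_mul horder (by simpa using hι)
  rwa [finrank_fintype_fun_eq_card, Nat.card_zmod, Nat.cast_two] at hdvd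

lemma orderOf_ne_thirtyfive (x : GL (Fin 6) (ZMod 2)) : orderOf x ≠ 5 * 7 := by
  intro hx
  have htwo : orderOf (2 : ZMod 5) = 2 ^ (1 + 1) := orderOf_eq_prime_pow (by decide) (by decide)
  have : Fact (Nat.Prime 5) := ⟨by norm_num⟩
  have : Fact (Nat.Prime 7) := ⟨by norm_num⟩
  have hdvd := dvd_two_pow_sub_one_or_dvd_card_GL_of_orderOf_eq_mul hx (by simp [htwo])
  rw [htwo, Fintype.card_fin, Matrix.card_GL_field, ZMod.card] at hdvd
  revert hdvd
  decide

lemma orderOf_ne_mul_thirtyone (x : GL (Fin 6) (ZMod 2)) {p : ℕ} (hp : p.Prime) (hp31 : p ≠ 31) :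
    orderOf x ≠ p * 31 := by
  rw [mul_comm]
  intro hx
  have : Fact (Nat.Prime 5) := ⟨by norm_num⟩
  have htwo : orderOf (2 : ZMod 31) = 5 := orderOf_eq_prime (by decide) (by decide)
  have : Fact p.Prime := ⟨hp⟩
  have : Fact (Nat.Prime 31) := ⟨by norm_num⟩
  have hdvd := dvd_two_pow_sub_one_or_dvd_card_GL_of_orderOf_eq_mul hx (by simp [htwo])
  have hone : Nat.card (GL (Fin 1) (ZMod 2)) = 1 := by
    rw [Matrix.card_GL_field, ZMod.card]
    decide
  rw [htwo, Fintype.card_fin, hone] at hdvd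
  rcases hdvd with h | h
  · exact hp31 ((Nat.prime_dvd_prime_iff_eq hp (by norm_num)).mp h)
  · exact hp.one_lt.ne' (Nat.dvd_one.mp h)

lemma mul_mem_of_orderOf_eq_mul {x : GL (Fin 6) (ZMod 2)} {r s : ℕ} (hr : r.Prime) (hs : s.Prime)
    (hrs : r < s) (hx : orderOf x = r * s) : r * s ∈ ({6, 10, 14, 15, 21} : Finset ℕ) := by
  have mem_of_dvd {p : ℕ} (hp : p.Prime) (h : p ∣ r * s) : p ∈ ({2, 3, 5, 7, 31} : Finset ℕ) := by
    rw [← primeFactors_card_GL_six_two]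
    exact hp.mem_primeFactors ((hx ▸ h).trans (orderOf_dvd_natCard x)) Nat.card_pos.ne'
  have hr' := mem_of_dvd hr (dvd_mul_right r s)
  have hs' := mem_of_dvd hs (dvd_mul_left s r)
  have h57 : ¬ (r = 5 ∧ s = 7) := by
    rintro ⟨rfl, rfl⟩
    exact orderOf_ne_thirtyfive x hx
  have h31 : s ≠ 31 := by
    rintro rfl
    exact orderOf_ne_mul_thirtyone x hr hrs.ne hx
  simp only [Finset.mem_insert, Finset.mem_singleton] at hr' hs'
  rcases hr' with rfl | rfl | rfl | rfl | rfl <;> rcases hs' with rfl | rfl | rfl | rfl | rfl <;>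
    first | omega | decide

end GLSixTwo

section Constructions

section CommRing

variable {R V W : Type*} [CommRing R] [AddCommGroup V] [Module R V] [AddCommGroup W] [Module R W]

lemma transvection_pow {φ : Dual R V} {v : V} (hφv : φ v = 0) (n : ℕ) :
    LinearMap.transvection φ v ^ n = LinearMap.transvection φ (n • v) := by
  induction n with
  | zero => simp [LinearMap.transvection.of_right_eq_zero, End.one_eq_id]
  | succ n ih =>
    rw [pow_succ, ih, End.mul_eq_comp, LinearMap.transvection.comp_of_left_eq hφv, succ_nsmul]

lemma orderOf_prodMap (f : End R V) (g : End R W) :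
    orderOf (f.prodMap g : End R (V × W)) = (orderOf f).lcm (orderOf g) := by
  have hinj : Function.Injective (LinearMap.prodMapRingHom R V W) := by
    rintro ⟨f₁, g₁⟩ ⟨f₂, g₂⟩ h
    have h₁ (v : V) : f₁ v = f₂ v := congrArg Prod.fst (LinearMap.congr_fun h (v, 0))
    have h₂ (w : W) : g₁ w = g₂ w := congrArg Prod.snd (LinearMap.congr_fun h (0, w))
    exact Prod.ext (LinearMap.ext h₁) (LinearMap.ext h₂)
  rw [← Prod.orderOf_mk]
  exact orderOf_injective (LinearMap.prodMapRingHom R V W).toMonoidHom hinj (f, g)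

lemma exists_prod_fixedSubmodule_ne_bot_orderOf_eq_lcm {m n : ℕ}
    (hm : ∃ f : End R V, f.fixedSubmodule ≠ ⊥ ∧ orderOf f = m)
    (hn : ∃ g : End R W, orderOf g = n) :
    ∃ f : End R (V × W), f.fixedSubmodule ≠ ⊥ ∧ orderOf f = m.lcm n := by
  obtain ⟨f, hf, rfl⟩ := hm
  obtain ⟨g, rfl⟩ := hn
  obtain ⟨v, hv, hv0⟩ := Submodule.exists_mem_ne_zero_of_ne_bot hf
  refine ⟨f.prodMap g, (Submodule.ne_bot_iff _).mpr ⟨(v, 0), ?_, ?_⟩, orderOf_prodMap f g⟩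
  · simpa using hv
  · simpa using hv0

variable (R V) in
lemma exists_fixedSubmodule_ne_bot_orderOf_eq_one [Nontrivial V] :
    ∃ f : End R V, f.fixedSubmodule ≠ ⊥ ∧ orderOf f = 1 :=
  ⟨1, by simp [LinearMap.fixedSubmodule_eq_top_iff.mpr End.one_eq_id], orderOf_one⟩

lemma exists_end_orderOf_eq_of_dvd_card_sub_one {K : Type*} [Field K] [Algebra R K] [Finite K]
    {n : ℕ} (hn : n ∣ Nat.card K - 1) : ∃ f : End R K, orderOf f = n := by
  obtain ⟨u, hu⟩ := IsCyclic.exists_ofOrder_eq_natCard (α := Kˣ)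
  rw [Nat.card_units] at hu
  have hpow : orderOf (u ^ (orderOf u / n)) = n :=
    orderOf_pow_orderOf_div (orderOf_pos u).ne' (hu ▸ hn)
  have hinj := orderOf_injective (Algebra.lmul R K : K →* End R K) Algebra.lmul_injective
  exact ⟨Algebra.lmul R K ↑(u ^ (orderOf u / n)), (hinj _).trans (orderOf_units.trans hpow)⟩

end CommRing

section Field

variable {F V : Type*} [Field F] [AddCommGroup V] [Module F V]

lemma orderOf_transvection (p : ℕ) [Fact p.Prime] [CharP F p] {φ : Dual F V} {v : V} (hφ : φ ≠ 0)
    (hv : v ≠ 0) (hφv : φ v = 0) : orderOf (LinearMap.transvection φ v) = p := by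
  refine orderOf_eq_prime ?_ fun h => ?_
  · rw [transvection_pow hφv, ← Nat.cast_smul_eq_nsmul F, CharP.cast_eq_zero, zero_smul,
      LinearMap.transvection.of_right_eq_zero, End.one_eq_id]
  · obtain ⟨w, hw⟩ := DFunLike.ne_iff.mp hφ
    have hmoved : w + φ w • v = w := by
      simpa [LinearMap.transvection.apply] using LinearMap.congr_fun h w
    exact smul_ne_zero hw hv (add_eq_left.mp hmoved)

lemma exists_fixedSubmodule_ne_bot_orderOf_eq_char (p : ℕ) [Fact p.Prime] [CharP F p]
    (hV : 1 < finrank F V) : ∃ f : End F V, f.fixedSubmodule ≠ ⊥ ∧ orderOf f = p := by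
  have := nontrivial_of_finrank_pos (R := F) (M := V) (by omega)
  obtain ⟨v, hv⟩ := exists_ne (0 : V)
  have hspan : F ∙ v < ⊤ := span_lt_top_of_card_lt_finrank (by simpa using hV)
  obtain ⟨φ, hφ, hker⟩ := (F ∙ v).exists_le_ker_of_lt_top hspan
  have hφv : φ v = 0 := hker (Submodule.mem_span_singleton_self v)
  refine ⟨LinearMap.transvection φ v, ?_, orderOf_transvection p hφ hv hφv⟩
  exact (Submodule.ne_bot_iff _).mpr ⟨v, by simp [LinearMap.transvection.apply, hφv], hv⟩

variable [FiniteDimensional F V]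

lemma exists_linearEquiv_apply_eq {W : Type*} [AddCommGroup W] [Module F W] [FiniteDimensional F W]
    (h : finrank F V = finrank F W) {v : V} {w : W} (hv : v ≠ 0) (hw : w ≠ 0) :
    ∃ e : V ≃ₗ[F] W, e v = w := by
  let e := LinearEquiv.ofFinrankEq V W h
  let line (u : W) (hu : u ≠ 0) := LinearEquiv.toSpanNonzeroSingleton F W u hu
  have hev : e v ≠ 0 := e.map_ne_zero_iff.mpr hv
  obtain ⟨g, hg⟩ :=
    Submodule.exists_linearEquiv_restrict_eq ((line (e v) hev).symm.trans (line w hw))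
  refine ⟨e.trans g, ?_⟩
  have hline := hg (line (e v) hev 1)
  rw [LinearEquiv.trans_apply, LinearEquiv.symm_apply_apply] at hline
  simpa [line, -LinearEquiv.toSpanNonzeroSingleton_symm_apply_smul] using hline.symm

lemma exists_GL_mulVec_eq_self_orderOf_eq {ι : Type*} [Fintype ι] [DecidableEq ι]
    (hV : finrank F V = Fintype.card ι) {n : ℕ} (hn : n ≠ 0)
    (h : ∃ f : End F V, f.fixedSubmodule ≠ ⊥ ∧ orderOf f = n) {w : ι → F} (hw : w ≠ 0) :
    ∃ g : GL ι F, (g : Matrix ι ι F) *ᵥ w = w ∧ orderOf g = n := by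
  obtain ⟨f, hf, rfl⟩ := h
  obtain ⟨v, hv, hv0⟩ := Submodule.exists_mem_ne_zero_of_ne_bot hf
  obtain ⟨e, rfl⟩ := exists_linearEquiv_apply_eq (hV.trans (finrank_fintype_fun_eq_card F).symm)
    hv0 hw
  obtain ⟨u, rfl⟩ := (orderOf_ne_zero_iff.mp hn).isUnit
  refine ⟨(Matrix.GeneralLinearGroup.toLin' (Basis.ofEquivFun e)).symm u, ?_, ?_⟩
  · calc LinearMap.toMatrix (Basis.ofEquivFun e) (Basis.ofEquivFun e) ↑u *ᵥ e v
      _ = e ((u : End F V) v) := LinearMap.toMatrix_mulVec_repr _ _ _ v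
      _ = e v := congrArg e hv
  · rw [MulEquiv.orderOf_eq, orderOf_units]

end Field

end Constructions

section Stabilizer

/-- The parabolic subgroup `P₁` of `GL₆(2)`: over the field with two elements, the stabilizer of a
line is the stabilizer of its nonzero vector. -/
abbrev parabolicOne : Subgroup (GL (Fin 6) (ZMod 2)) :=
  MulAction.stabilizer (GL (Fin 6) (ZMod 2)) (Pi.single 0 1 : Fin 6 → ZMod 2)

lemma exists_parabolicOne_orderOf_eq {V : Type*} [AddCommGroup V] [Module (ZMod 2) V]
    (hV : finrank (ZMod 2) V = 6) {n : ℕ} (hn : n ≠ 0)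
    (h : ∃ f : End (ZMod 2) V, f.fixedSubmodule ≠ ⊥ ∧ orderOf f = n) :
    ∃ y : parabolicOne, orderOf y = n := by
  have : FiniteDimensional (ZMod 2) V := .of_finrank_pos (by omega)
  obtain ⟨g, hfix, horder⟩ := exists_GL_mulVec_eq_self_orderOf_eq (ι := Fin 6)
    (hV.trans (Fintype.card_fin 6).symm) hn h (w := Pi.single 0 1) (by simp)
  exact ⟨⟨g, hfix⟩, (Subgroup.orderOf_mk g hfix).trans horder⟩

lemma exists_parabolicOne_orderOf_eq_lcm {V : Type*} [AddCommGroup V] [Module (ZMod 2) V]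
    [FiniteDimensional (ZMod 2) V] {k m n : ℕ} (hk : k ≠ 0) (hV : finrank (ZMod 2) V + k = 6)
    (hm0 : m ≠ 0) (hm : ∃ f : End (ZMod 2) V, f.fixedSubmodule ≠ ⊥ ∧ orderOf f = m)
    (hn : n ∣ 2 ^ k - 1) : ∃ y : parabolicOne, orderOf y = m.lcm n := by
  have hn0 : n ≠ 0 := ne_zero_of_dvd_ne_zero (Nat.sub_ne_zero_of_lt (Nat.one_lt_two_pow hk)) hn
  rw [← GaloisField.card 2 k hk] at hn
  refine exists_parabolicOne_orderOf_eq (V := V × GaloisField 2 k) ?_ (Nat.lcm_ne_zero hm0 hn0)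
    (exists_prod_fixedSubmodule_ne_bot_orderOf_eq_lcm hm
      (exists_end_orderOf_eq_of_dvd_card_sub_one hn))
  rw [finrank_prod, GaloisField.finrank 2 hk, hV]

lemma exists_parabolicOne_orderOf_eq_of_mem {n : ℕ}
    (hn : n ∈ ({6, 10, 14, 15, 21, 31} : Finset ℕ)) : ∃ y : parabolicOne, orderOf y = n := by
  have transvection {k : ℕ} (hk : 1 < k) :
      ∃ f : End (ZMod 2) (Fin k → ZMod 2), f.fixedSubmodule ≠ ⊥ ∧ orderOf f = 2 :=
    exists_fixedSubmodule_ne_bot_orderOf_eq_char 2 (by simpa using hk)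
  have identity (k : ℕ) [NeZero k] :
      ∃ f : End (ZMod 2) (Fin k → ZMod 2), f.fixedSubmodule ≠ ⊥ ∧ orderOf f = 1 :=
    exists_fixedSubmodule_ne_bot_orderOf_eq_one (ZMod 2) (Fin k → ZMod 2)
  have hthree : ∃ f : End (ZMod 2) ((Fin 1 → ZMod 2) × GaloisField 2 2),
      f.fixedSubmodule ≠ ⊥ ∧ orderOf f = Nat.lcm 1 3 :=
    exists_prod_fixedSubmodule_ne_bot_orderOf_eq_lcm (identity 1)
      (exists_end_orderOf_eq_of_dvd_card_sub_one (by norm_num [GaloisField.card 2 2 two_ne_zero]))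
  simp only [Finset.mem_insert, Finset.mem_singleton] at hn
  rcases hn with rfl | rfl | rfl | rfl | rfl | rfl
  · exact exists_parabolicOne_orderOf_eq_lcm (k := 4) (n := 3) (by decide) (by simp) two_ne_zero
      (transvection one_lt_two) (by decide)
  · exact exists_parabolicOne_orderOf_eq_lcm (k := 4) (n := 5) (by decide) (by simp) two_ne_zero
      (transvection one_lt_two) (by decide)
  · exact exists_parabolicOne_orderOf_eq_lcm (k := 3) (n := 7) (by decide) (by simp) two_ne_zero
      (transvection (k := 3) (by decide)) (by decide)
  · exact exists_parabolicOne_orderOf_eq_lcm (k := 4) (n := 15) (by decide) (by simp) one_ne_zero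
      (identity 2) (by decide)
  · exact exists_parabolicOne_orderOf_eq_lcm (k := 3) (n := 7) (by decide)
      (by simp [GaloisField.finrank 2 two_ne_zero]) (by decide) hthree (by decide)
  · exact exists_parabolicOne_orderOf_eq_lcm (k := 5) (n := 31) (by decide) (by simp) one_ne_zero
      (identity 1) (by decide)

end Stabilizer

/-- `Γ(L₆(2)) = Γ(P₁)`, where `L₆(2) = GL₆(𝔽₂)` and `P₁` is the stabilizer of the
standard basis vector `e₀` (equivalently of the line it spans), a maximal parabolic
subgroup `2⁵.L₅(2)`. -/
theorem prime_graph_L6_2_eq_P1 :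
    (∀ t : ℕ, t.Prime →
      (t ∣ Nat.card (Matrix.GeneralLinearGroup (Fin 6) (ZMod 2)) ↔
        t ∣ Nat.card (MulAction.stabilizer (Matrix.GeneralLinearGroup (Fin 6) (ZMod 2))
          ((Pi.single 0 1 : Fin 6 → ZMod 2))))) ∧
    (∀ r s : ℕ, r.Prime → s.Prime → r ≠ s →
      ((∃ x : Matrix.GeneralLinearGroup (Fin 6) (ZMod 2), orderOf x = r * s) ↔
        (∃ y : MulAction.stabilizer (Matrix.GeneralLinearGroup (Fin 6) (ZMod 2))
          ((Pi.single 0 1 : Fin 6 → ZMod 2)), orderOf y = r * s))) := by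
  constructor
  · intro t ht
    refine ⟨fun h => ?_, fun h => h.trans (Subgroup.card_subgroup_dvd_card _)⟩
    have ht' : t ∈ ({2, 3, 5, 7, 31} : Finset ℕ) :=
      primeFactors_card_GL_six_two ▸ ht.mem_primeFactors h Nat.card_pos.ne'
    have hcover : ∀ p ∈ ({2, 3, 5, 7, 31} : Finset ℕ),
        ∃ n ∈ ({6, 10, 14, 15, 21, 31} : Finset ℕ), p ∣ n := by decide
    obtain ⟨n, hn, htn⟩ := hcover t ht'
    obtain ⟨y, rfl⟩ := exists_parabolicOne_orderOf_eq_of_mem hn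
    exact htn.trans (orderOf_dvd_natCard y)
  · intro r s hr hs hrs
    refine ⟨?_, fun ⟨y, hy⟩ => ⟨y, (Subgroup.orderOf_coe y).trans hy⟩⟩
    rintro ⟨x, hx⟩
    wlog h : r < s generalizing r s
    · rw [mul_comm] at hx ⊢
      exact this s r hs hr hrs.symm hx (hrs.lt_or_gt.resolve_left h)
    exact exists_parabolicOne_orderOf_eq_of_mem
      (Finset.mem_of_subset (by decide) (mul_mem_of_orderOf_eq_mul hr hs h hx))
end
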